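/- arXiv:2412.20729 — 2 statements merged into one kernel-verified Lean document; each statement's English description precedes it below -/
import Mathlib

section
/- If G is a 2-connected chordal graph with a minimal tree representation T, then lct(G) ≤ 4 · ccg(T). -/
open SimpleGraph

/-- A graph is chordal if every cycle on at least 4 vertices has a chord
(an edge of the graph joining two vertices of the cycle that is not an edge of the cycle). -/
def IsChordal {V : Type} (G : SimpleGraph V) : Prop :=
  ∀ (v : V) (c : G.Walk v v), c.IsCycle → 4 ≤ c.length →
    ∃ a b : V, a ∈ c.support ∧ b ∈ c.support ∧ G.Adj a b ∧ s(a, b) ∉ c.edges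

/-- A tree representation of `G` with host tree `T`: each vertex `u` of `G` gets a
nonempty subtree `S u` of `T`, and distinct vertices are adjacent iff their subtrees meet. -/
structure TreeRep {V W : Type} (G : SimpleGraph V) (T : SimpleGraph W) : Type where
  isTree : T.IsTree
  S : V → Set W
  subtree_connected : ∀ u : V, (T.induce (S u)).Connected
  adj_iff : ∀ u v : V, u ≠ v → (G.Adj u v ↔ (S u ∩ S v).Nonempty)

/-- A tree representation is minimal if no tree representation of `G` has a host tree
with fewer vertices. -/
def TreeRep.IsMinimal {V W : Type} [Fintype W] {G : SimpleGraph V} {T : SimpleGraph W}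
    (_R : TreeRep G T) : Prop :=
  ∀ (W' : Type) [Fintype W'] (T' : SimpleGraph W'),
    Nonempty (TreeRep G T') → Fintype.card W ≤ Fintype.card W'

/-- The bag of a host tree vertex `x`. -/
def TreeRep.bag {V W : Type} {G : SimpleGraph V} {T : SimpleGraph W}
    (R : TreeRep G T) (x : W) : Set V :=
  {u : V | x ∈ R.S u}

/-- In `T` rooted at `r`, the (vertex set of the) subtree rooted at `x`: all vertices `w`
such that the `r`–`w` path contains `x`. -/
def rootedSubtree {W : Type} (T : SimpleGraph W) (r x : W) : Set W :=
  {w : W | ∀ p : T.Walk r w, p.IsPath → x ∈ p.support}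

/-- The core of a subgraph `H` of `G`: the union over edges `uv` of `H` of `V(S u ∩ S v)`,
a set of host-tree vertices. -/
def TreeRep.core {V W : Type} {G : SimpleGraph V} {T : SimpleGraph W}
    (R : TreeRep G T) (H : G.Subgraph) : Set W :=
  {t : W | ∃ u v : V, H.Adj u v ∧ t ∈ R.S u ∧ t ∈ R.S v}

/-- `C` is a connected component of the subgraph of `T` induced on the vertex set `s`. -/
def IsCompOf {W : Type} (T : SimpleGraph W) (s C : Set W) : Prop :=
  C.Nonempty ∧ C ⊆ s ∧ (T.induce C).Connected ∧
    ∀ ⦃a b : W⦄, a ∈ C → b ∈ s → T.Adj a b → b ∈ C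

/-- A graph is 2-connected if it has more than 2 vertices and deleting any one vertex
leaves it connected. -/
def TwoConnected {V : Type} (G : SimpleGraph V) : Prop :=
  2 < Nat.card V ∧ ∀ v : V, (G.induce {v}ᶜ).Connected

/-- `G` is `k`-connected: more than `k` vertices, and deleting fewer than `k` vertices
leaves it connected. -/
def IsKConnectedGraph {V : Type} (G : SimpleGraph V) (k : ℕ) : Prop :=
  k < Nat.card V ∧ ∀ s : Set V, s.Finite → s.ncard < k → (G.induce sᶜ).Connected

/-- The vertex connectivity `κ(G)`: the maximum `k` such that `G` is `k`-connected. -/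
noncomputable def vertexConnectivity {V : Type} (G : SimpleGraph V) : ℕ :=
  sSup {k : ℕ | IsKConnectedGraph G k}

/-- `p` is a path of maximum length in `G`. -/
def IsLongestPath {V : Type} (G : SimpleGraph V) {a b : V} (p : G.Walk a b) : Prop :=
  p.IsPath ∧ ∀ (c d : V) (q : G.Walk c d), q.IsPath → q.length ≤ p.length

/-- `c` is a cycle of maximum length in `G`. -/
def IsLongestCycle {V : Type} (G : SimpleGraph V) {a : V} (c : G.Walk a a) : Prop :=
  c.IsCycle ∧ ∀ (d : V) (q : G.Walk d d), q.IsCycle → q.length ≤ c.length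

/-- The longest path transversal number of `G`: the least size of a set of vertices
meeting every longest path. -/
noncomputable def lpt {V : Type} (G : SimpleGraph V) : ℕ :=
  sInf {k : ℕ | ∃ A : Set V, A.Finite ∧ A.ncard = k ∧
    ∀ (a b : V) (p : G.Walk a b), IsLongestPath G p → ∃ v ∈ A, v ∈ p.support}

/-- The longest cycle transversal number of `G`: the least size of a set of vertices
meeting every longest cycle. -/
noncomputable def lct {V : Type} (G : SimpleGraph V) : ℕ :=
  sInf {k : ℕ | ∃ A : Set V, A.Finite ∧ A.ncard = k ∧
    ∀ (a : V) (c : G.Walk a a), IsLongestCycle G c → ∃ v ∈ A, v ∈ c.support}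

/-- `DQX T q X Q0`: the union, over `y ∈ Q0`, of the component of `X − E(Q)` containing
`y` (all vertices joined to some `y ∈ Q0` by a walk inside `X` avoiding the edges of `q`). -/
def DQX {W : Type} (T : SimpleGraph W) {x z : W} (q : T.Walk x z) (X : Set W)
    (Q0 : Set W) : Set W :=
  {w : W | ∃ y ∈ Q0, ∃ d : (T.deleteEdges {e : Sym2 W | e ∈ q.edges}).Walk y w,
    ∀ a ∈ d.support, a ∈ X}

/-- Cutter can force the Cutter–Chooser game from position `(X, x)` (a subtree `X` of the
host tree, rooted at `x`) to end within `t` rounds: Cutter picks `z ∈ X` and cuts along the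
`x`–`z` path `Q` in `X`; either `X = Q` (game over), or for every component `X'` of
`X − V(Q)` (with its root `x'`, the vertex of `X'` adjacent to `Q`) that Chooser may pick,
Cutter wins within `t - 1` further rounds. -/
def cutterWins {W : Type} (T : SimpleGraph W) : ℕ → Set W → W → Prop
  | 0, _, _ => False
  | t + 1, X, x =>
      ∃ z ∈ X, ∃ p : T.Walk x z, p.IsPath ∧ (∀ w ∈ p.support, w ∈ X) ∧
        (X = {w : W | w ∈ p.support} ∨
          ∀ (X' : Set W) (x' : W), IsCompOf T (X \ {w : W | w ∈ p.support}) X' →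
            x' ∈ X' → (∃ u ∈ p.support, T.Adj u x') → cutterWins T t X' x')

/-- `ccg(X, x)`: the number of rounds of the Cutter–Chooser game on the subtree `X` of the
host tree rooted at `x`, under optimal play. -/
noncomputable def ccgOn {W : Type} (T : SimpleGraph W) (X : Set W) (x : W) : ℕ :=
  sInf {t : ℕ | cutterWins T t X x}

/-- `ccg(T)`: the minimum over roots `r` of `ccg(T, r)`. -/
noncomputable def ccg {W : Type} (T : SimpleGraph W) : ℕ :=
  sInf (Set.range fun r : W => ccgOn T Set.univ r)

/-- A subdivided caterpillar: a tree having a (spine) path containing every vertex of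
degree at least 3. -/
def IsSubdividedCaterpillar {W : Type} (T : SimpleGraph W) : Prop :=
  T.IsTree ∧ ∃ (a b : W) (q : T.Walk a b), q.IsPath ∧
    ∀ v : W, 3 ≤ (T.neighborSet v).ncard → v ∈ q.support

/-- A subdivided star: a tree with at most one vertex of degree at least 3. -/
def IsSubdividedStar {W : Type} (T : SimpleGraph W) : Prop :=
  T.IsTree ∧ ∀ v w : W, 3 ≤ (T.neighborSet v).ncard → 3 ≤ (T.neighborSet w).ncard → v = w

/-- A leaf: a vertex of degree 1. -/
def IsLeaf {W : Type} (T : SimpleGraph W) (v : W) : Prop := (T.neighborSet v).ncard = 1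

/-- `mf T`: the maximum over edges `e` of `T` of the minimum number of leaves of `T`
contained in a component of `T − e`. -/
noncomputable def mf {W : Type} (T : SimpleGraph W) : ℕ :=
  sSup {k : ℕ | ∃ u v : W, T.Adj u v ∧
    k = min {w : W | IsLeaf T w ∧ (T.deleteEdges {s(u, v)}).Reachable u w}.ncard
            {w : W | IsLeaf T w ∧ (T.deleteEdges {s(u, v)}).Reachable v w}.ncard}

/-- In `T` rooted at `r`, `v` is a child of `u`. -/
def IsChildIn {W : Type} (T : SimpleGraph W) (r u v : W) : Prop :=
  T.Adj u v ∧ ∀ p : T.Walk r v, p.IsPath → u ∈ p.support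

/-- In `T` rooted at `r`, `u` is childless. -/
def IsChildlessIn {W : Type} (T : SimpleGraph W) (r u : W) : Prop :=
  ¬ ∃ v : W, IsChildIn T r u v



/-- A cyclic list of vertices that is a cycle of `G`. -/
def LCyc {V : Type} (G : SimpleGraph V) (l : List V) : Prop :=
  l.Nodup ∧ 3 ≤ l.length ∧ Cycle.Chain G.Adj (l : Cycle V)

/-- A list cycle of maximum length. -/
def LMax {V : Type} (G : SimpleGraph V) (l : List V) : Prop :=
  LCyc G l ∧ ∀ l', LCyc G l' → l'.length ≤ l.length

/-- Cyclically consecutive elements: `b` followed by `a`. -/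
def LEd {V : Type} (l : List V) (a b : V) : Prop := ∃ M, l ~r a :: (M ++ [b])

theorem LCyc.rot {V : Type} {G : SimpleGraph V} {l l' : List V} (h : LCyc G l) (hr : l ~r l') :
    LCyc G l' := by
  refine ⟨hr.nodup_iff.1 h.1, hr.perm.length_eq ▸ h.2.1, ?_⟩
  rw [← Cycle.coe_eq_coe.2 hr]; exact h.2.2

theorem LMax.rot {V : Type} {G : SimpleGraph V} {l l' : List V} (h : LMax G l) (hr : l ~r l') :
    LMax G l' := ⟨h.1.rot hr, fun k hk => hr.perm.length_eq ▸ h.2 k hk⟩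

theorem LEd.rot {V : Type} {l l' : List V} {a b : V} (h : LEd l a b) (hr : l ~r l') : LEd l' a b := by
  obtain ⟨M, hM⟩ := h
  exact ⟨M, hr.symm.trans hM⟩

theorem LEd.adj {V : Type} {G : SimpleGraph V} {l : List V} {a b : V} (h : LEd l a b)
    (hl : LCyc G l) : G.Adj b a := by
  obtain ⟨M, hM⟩ := h
  have := (hl.rot hM).2.2
  rw [Cycle.chain_coe_cons] at this
  have h2 : List.IsChain G.Adj ((a :: M) ++ (b :: [a])) := by simpa using this
  have h3 := (List.isChain_append_cons_cons.1 h2)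
  tauto

theorem LEd.mem {V : Type} {l : List V} {a b : V} (h : LEd l a b) : a ∈ l ∧ b ∈ l := by
  obtain ⟨M, hM⟩ := h
  simp [hM.mem_iff]

theorem LEd.of_append {V : Type} {l U X : List V} {a b : V} (h : l ~r U ++ a :: b :: X) :
    LEd l b a := by
  refine ⟨X ++ U, h.trans ?_⟩
  have := List.isRotated_append (l := U ++ [a]) (l' := b :: X)
  simpa using this

theorem rot_cons {V : Type} {l : List V} {a : V} (h : a ∈ l) : ∃ M, l ~r a :: M := by
  obtain ⟨s, t, rfl⟩ := List.append_of_mem h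
  exact ⟨t ++ s, by simpa using List.isRotated_append (l := s) (l' := a :: t)⟩

theorem LCyc.exists_LEd {V : Type} {G : SimpleGraph V} {l : List V} (hl : LCyc G l) {a : V}
    (h : a ∈ l) : ∃ b, LEd l a b := by
  obtain ⟨M, hM⟩ := rot_cons h
  have h3 := (hl.rot hM).2.1
  rcases List.eq_nil_or_concat M with rfl | ⟨M', b, rfl⟩
  · simp at h3
  · exact ⟨b, M', by simpa using hM⟩

theorem LMax.repl {V : Type} {G : SimpleGraph V} {l : List V} (hl : LMax G l)
    {A g h A1 A2 : List V} {a b : V} (hr : l ~r A ++ g) (h1 : A = b :: A1) (h2 : A = A2 ++ [a])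
    (hnd : h.Nodup) (hdis : ∀ x ∈ h, x ∉ A) (hch : (a :: (h ++ [b])).IsChain G.Adj) :
    h.length ≤ g.length := by
  by_contra hlt
  push Not at hlt
  have hc := hl.1.rot hr
  have hlen := hr.perm.length_eq
  have hl3 := hl.1.2.1
  have hnew : LCyc G (A ++ h) := by
    refine ⟨?_, ?_, ?_⟩
    · rw [List.nodup_append']
      refine ⟨(List.nodup_append'.1 hc.1).1, hnd, ?_⟩
      intro x hx hx'
      exact hdis x hx' hx
    · simp at hlen ⊢; omega
    · have h3 := hc.2.2
      have hA : A.IsChain G.Adj := by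
        rw [h1, List.cons_append, Cycle.chain_coe_cons] at h3
        have : List.IsChain G.Adj ((b :: A1) ++ (g ++ [b])) := by simpa using h3
        rw [h1]; exact this.left_of_append
      have : ((A ++ h : List V) : Cycle V) = ((b :: (A1 ++ h) : List V) : Cycle V) := by
        rw [h1]; rfl
      rw [this, Cycle.chain_coe_cons]
      have e : b :: (A1 ++ h ++ [b]) = A2 ++ a :: (h ++ [b]) := by
        have : b :: A1 = A2 ++ [a] := h1.symm.trans h2
        calc b :: (A1 ++ h ++ [b]) = (b :: A1) ++ (h ++ [b]) := by simp
          _ = _ := by rw [this]; simp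
      rw [e, List.isChain_split]
      exact ⟨h2 ▸ hA, hch⟩
  have := hl.2 _ hnew
  simp at hlen this; omega

theorem LCyc.of_walk {V : Type} {G : SimpleGraph V} {a : V} (c : G.Walk a a) (hc : c.IsCycle) :
    LCyc G c.support.tail ∧ c.support.tail.length = c.length ∧
      ∀ v, v ∈ c.support.tail → v ∈ c.support := by
  refine ⟨⟨hc.support_nodup, ?_, ?_⟩, by simp, fun v hv => List.mem_of_mem_tail hv⟩
  · simpa using hc.three_le_length
  · have h := c.isChain_adj_support
    cases c with
    | nil => simp at hc
    | cons hadj p =>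
      simp only [Walk.support_cons, List.tail_cons] at *
      rcases List.eq_nil_or_concat p.support with h0 | ⟨M, b, hM⟩
      · simp at h0
      · have hb : b = a := by
          have h1 : p.support.getLast (by simp) = a := p.getLast_support
          simp only [hM] at h1
          simpa using h1
        subst hb
        rw [hM]
        have : ((M.concat b : List V) : Cycle V) = ((b :: M : List V) : Cycle V) := by
          rw [Cycle.coe_eq_coe]
          simpa using (List.isRotated_append (l := M) (l' := [b]))
        rw [this, Cycle.chain_coe_cons]
        rw [hM] at h
        simpa using h

theorem exists_walk_of_chain {V : Type} {G : SimpleGraph V} : ∀ (L : List V) (b : V),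
    (b :: L).IsChain G.Adj → ∀ a, (b :: L).getLast? = some a →
      ∃ p : G.Walk b a, p.support = b :: L
  | [], b, _, a, h => by
    obtain rfl : b = a := by simpa using h
    exact ⟨Walk.nil, rfl⟩
  | c :: L, b, hch, a, h => by
    obtain ⟨p, hp⟩ := exists_walk_of_chain L c hch.tail a (by simpa using h)
    exact ⟨Walk.cons hch.rel p, by simp [hp]⟩

theorem LCyc.to_walk {V : Type} {G : SimpleGraph V} {l : List V} (hl : LCyc G l) :
    ∃ (a : V) (c : G.Walk a a), c.IsCycle ∧ c.length = l.length := by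
  have h3 := hl.2.1
  obtain ⟨a, ha⟩ := List.exists_mem_of_length_pos (l := l) (by omega)
  obtain ⟨M, hM⟩ := rot_cons ha
  have hc := hl.rot hM
  have hch := hc.2.2
  rw [Cycle.chain_coe_cons] at hch
  rw [hM.perm.length_eq] at h3 ⊢
  have hnd := hc.1
  clear hc hM
  obtain ⟨b, M, rfl⟩ : ∃ b N, M = b :: N := by cases M <;> simp at *
  have hch2 : List.IsChain G.Adj (b :: (M ++ [a])) := by
    simp only [List.cons_append] at hch
    exact hch.tail
  have hab : G.Adj a b := by
    simp only [List.cons_append] at hch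
    exact hch.rel
  obtain ⟨p, hs⟩ : ∃ p : G.Walk b a, p.support = b :: (M ++ [a]) :=
    exists_walk_of_chain _ _ hch2 _ (by rw [← List.cons_append]; exact List.getLast?_concat)
  have hpath : p.IsPath := by
    rw [Walk.isPath_def, hs]
    simp only [List.nodup_cons, List.mem_cons, not_or] at hnd
    simp only [List.nodup_cons, List.nodup_append, List.mem_append, List.mem_singleton]
    grind
  refine ⟨a, Walk.cons hab p, ?_, ?_⟩
  · rw [Walk.cons_isCycle_iff]
    refine ⟨hpath, fun hh => ?_⟩
    have h1 := hpath.eq_penultimate_of_mem_edges (by rwa [Sym2.eq_swap] at hh ⊢)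
    have : p.support[0] = p.support[p.length - 1] := by
      simp [← List.head_eq_getElem_zero, h1]
    have := p.isPath_iff_injective_get_support.mp hpath this
    have hlen : p.support.length = p.length + 1 := by simp
    rw [hs] at hlen
    simp at hlen h3
    simp at this
    omega
  · have hlen : p.support.length = p.length + 1 := by simp
    rw [hs] at hlen
    simp at hlen ⊢
    omega

theorem LMax.of_walk {V : Type} {G : SimpleGraph V} {a : V} (c : G.Walk a a)
    (hc : IsLongestCycle G c) : LMax G c.support.tail := by
  obtain ⟨h1, h2, -⟩ := LCyc.of_walk c hc.1
  refine ⟨h1, fun l' hl' => ?_⟩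
  obtain ⟨b, d, hd, hlen⟩ := hl'.to_walk
  rw [← hlen, h2]
  exact hc.2 b d hd


theorem list_split_first {V : Type} (K : V → Prop) : ∀ (L : List V), (∃ x ∈ L, K x) →
    ∃ I k J, L = I ++ k :: J ∧ K k ∧ ∀ x ∈ I, ¬ K x
  | [], h => by simp at h
  | a :: L, h => by
    by_cases ha : K a
    · exact ⟨[], a, L, rfl, ha, by simp⟩
    · obtain ⟨I, k, J, rfl, h1, h2⟩ := list_split_first K L (by
        obtain ⟨x, hx, hk⟩ := h
        rcases List.mem_cons.1 hx with rfl | hx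
        · exact absurd hk ha
        · exact ⟨x, hx, hk⟩)
      exact ⟨a :: I, k, J, rfl, h1, by
        intro x hx
        rcases List.mem_cons.1 hx with rfl | hx
        · exact ha
        · exact h2 x hx⟩

theorem list_split_last {V : Type} (K : V → Prop) (L : List V) (h : ∃ x ∈ L, K x) :
    ∃ J k I, L = J ++ k :: I ∧ K k ∧ ∀ x ∈ I, ¬ K x := by
  obtain ⟨I, k, J, h1, h2, h3⟩ := list_split_first K L.reverse (by simpa using h)
  refine ⟨J.reverse, k, I.reverse, ?_, h2, by simpa using h3⟩
  have := congrArg List.reverse h1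
  simpa using this

theorem path_first {V : Type} {G : SimpleGraph V} (h2 : TwoConnected G) (K : V → Prop) {s t k : V}
    (ht : t ≠ s) (hk : k ≠ s) (hK : K k) :
    ∃ I k', (I ++ [k']).IsChain G.Adj ∧ (I ++ [k']).Nodup ∧ (I ++ [k']).head? = some t ∧
      s ∉ I ++ [k'] ∧ K k' ∧ ∀ x ∈ I, ¬ K x := by
  obtain ⟨p, hp⟩ := (h2.2 s).exists_isPath ⟨t, ht⟩ ⟨k, hk⟩
  set L := p.support.map Subtype.val with hL
  have hch : L.IsChain G.Adj := by
    rw [hL, List.isChain_map]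
    exact p.isChain_adj_support
  have hnd : L.Nodup := by
    rw [hL]
    exact (List.nodup_map_iff Subtype.val_injective).2 hp.support_nodup
  have hhd : L.head? = some t := by
    rw [hL, ← p.cons_tail_support]; rfl
  have hs : s ∉ L := by
    rw [hL]; simp
  obtain ⟨I, k', J, h1, h3, h4⟩ := list_split_first K L ⟨k, by
    rw [hL]; exact List.mem_map.2 ⟨⟨k, hk⟩, p.end_mem_support, rfl⟩, hK⟩
  rw [h1] at hch hnd hhd hs
  refine ⟨I, k', ?_, ?_, ?_, ?_, h3, h4⟩
  · exact (List.isChain_split.1 hch).1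
  · rw [List.nodup_append] at *
    grind
  · cases I <;> simpa using hhd
  · grind

theorem trim {V : Type} {G : SimpleGraph V} (A B : V → Prop) {P : List V} {x : V}
    (hx : P.head? = some x) (hA : A x) (hB : ¬ B x) (hBy : ∃ y ∈ P, B y) (hch : P.IsChain G.Adj) :
    ∃ J0 c I k J, P = J0 ++ c :: (I ++ k :: J) ∧ A c ∧ ¬ B c ∧ B k ∧ (∀ x ∈ I, ¬ A x ∧ ¬ B x) ∧
      (c :: (I ++ [k])).IsChain G.Adj := by
  obtain ⟨I, k, J, rfl, h1, h2⟩ := list_split_first B P hBy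
  have hxI : x ∈ I := by
    cases I with
    | nil => simp at hx; subst hx; exact absurd h1 hB
    | cons a I => simp at hx; simp [hx]
  obtain ⟨J0, c, I', rfl, h3, h4⟩ := list_split_last A I ⟨x, hxI, hA⟩
  refine ⟨J0, c, I', k, J, by simp, h3, h2 c (by simp), h1, fun x hx => ⟨h4 x hx, h2 x (by simp [hx])⟩, ?_⟩
  apply hch.infix
  exact ⟨J0, J, by simp⟩

/-- Two disjoint lists starting at `a` and `b` and ending in `K`. -/
def DP {V : Type} (G : SimpleGraph V) (K : V → Prop) (a b : V) (P Q : List V) : Prop :=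
  P.head? = some a ∧ Q.head? = some b ∧ P.Nodup ∧ Q.Nodup ∧ (∀ x ∈ P, x ∉ Q) ∧
    P.IsChain G.Adj ∧ Q.IsChain G.Adj ∧ (∀ y ∈ P.getLast?, K y) ∧ (∀ y ∈ Q.getLast?, K y)

theorem DP.step {V : Type} {G : SimpleGraph V} (h2 : TwoConnected G) {K : V → Prop} {r s t : V}
    {P Q : List V} (h : DP G K r s P Q) (hrs : G.Adj r s) (hst : G.Adj s t) :
    ∃ P' Q', DP G K s t P' Q' := by
  obtain ⟨hP, hQ, nP, nQ, dis, cP, cQ, kP, kQ⟩ := h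
  have hrP : r ∈ P := List.mem_of_mem_head? hP
  have hsQ : s ∈ Q := List.mem_of_mem_head? hQ
  obtain ⟨I, k, c1, n1, hd, hs, hk, hI⟩ := path_first h2 (s := s) (t := t) (k := r)
    (fun x => K x ∨ x ∈ P ∨ (x ∈ Q ∧ x ≠ s)) hst.ne' hrs.ne (Or.inr (Or.inl hrP))
  have key : ∀ X, (k :: X).IsChain G.Adj → (k :: X).Nodup → (∀ y ∈ (k :: X).getLast?, K y) →
      (∀ x ∈ X, x ∈ P ∨ x ∈ Q ∧ x ≠ s) →
      (I ++ k :: X).head? = some t ∧ (I ++ k :: X).Nodup ∧ (I ++ k :: X).IsChain G.Adj ∧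
        ∀ y ∈ (I ++ k :: X).getLast?, K y := by
    intro X hX nX kX hXX
    refine ⟨?_, ?_, List.isChain_split.2 ⟨c1, hX⟩, ?_⟩
    · cases I <;> simpa using hd
    · rw [List.nodup_append] at *
      grind
    · simpa using kX
  by_cases hkP : k ∈ P
  · obtain ⟨U, X, rfl⟩ := List.append_of_mem hkP
    obtain ⟨e1, e2, e3, e4⟩ := key X (cP.right_of_append) (List.nodup_append'.1 nP).2.1
      (by simpa using kP) (by intro x hx; left; simp [hx])
    refine ⟨Q, I ++ k :: X, hQ, e1, nQ, e2, ?_, cQ, e3, kQ, e4⟩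
    intro x hx hx'
    rcases List.mem_append.1 hx' with h | h
    · have := hI x h
      have : x = s := by grind
      subst this
      exact hs (by simp [h])
    · exact dis x (by grind) hx
  · by_cases hkQ : k ∈ Q
    · obtain ⟨U, X, rfl⟩ := List.append_of_mem hkQ
      have hks : k ≠ s := by rintro rfl; simp at hs
      have kX : ∀ y ∈ (k :: X).getLast?, K y := by simpa using kQ
      obtain ⟨U, rfl⟩ : ∃ U', U = s :: U' := by
        cases U with
        | nil => simp at hQ; exact absurd hQ hks
        | cons a U => simp at hQ; exact ⟨U, by rw [hQ]⟩
      obtain ⟨e1, e2, e3, e4⟩ := key X (cQ.right_of_append) (List.nodup_append'.1 nQ).2.1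
        kX (by
          intro x hx; right
          refine ⟨by simp [hx], ?_⟩
          rintro rfl
          simp [hx] at nQ)
      refine ⟨s :: P, I ++ k :: X, rfl, e1, ?_, e2, ?_, ?_, e3, ?_, e4⟩
      · simp only [List.nodup_cons]
        exact ⟨fun h => dis s h hsQ, nP⟩
      · intro x hx hx'
        simp only [List.mem_cons, List.mem_append, List.nodup_cons, List.cons_append] at *
        grind
      · rw [List.isChain_cons]
        refine ⟨?_, cP⟩
        rw [hP]
        intro y hy
        simp at hy
        subst hy
        exact hrs.symm
      · cases P with
        | nil => simp at hP
        | cons a P => simpa using kP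
    · have hKk : K k := by grind
      obtain ⟨e1, e2, e3, e4⟩ := key [] (by simp) (by simp) (by simpa using hKk) (by simp)
      refine ⟨Q, I ++ [k], hQ, e1, nQ, e2, ?_, cQ, e3, kQ, e4⟩
      intro x hx hx'
      rcases List.mem_append.1 hx' with h | h
      · have := hI x h
        have : x = s := by grind
        subst this
        exact hs (by simp [h])
      · simp at h; subst h; exact hkQ hx

theorem DP.walk {V : Type} {G : SimpleGraph V} (h2 : TwoConnected G) {K : V → Prop} {s b : V}
    (p : G.Walk s b) : ∀ r P Q, DP G K r s P Q → G.Adj r s →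
      ∃ r' P' Q', DP G K r' b P' Q' ∧ G.Adj r' b := by
  induction p with
  | nil => intro r P Q h1 h3; exact ⟨r, P, Q, h1, h3⟩
  | cons hadj p ih =>
    intro r P Q h1 h3
    obtain ⟨P', Q', h⟩ := h1.step h2 h3 hadj
    exact ih _ P' Q' h hadj


theorem chain_rev {V : Type} {G : SimpleGraph V} {l : List V} (h : l.IsChain G.Adj) :
    l.reverse.IsChain G.Adj := by
  rw [List.isChain_reverse]
  exact h.imp (fun a b hab => hab.symm)

theorem chain_glue {V : Type} {G : SimpleGraph V} {a c : V} {X Y : List V}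
    (h : (a :: (X ++ [c])).IsChain G.Adj) (h' : (c :: Y).IsChain G.Adj) :
    (a :: (X ++ c :: Y)).IsChain G.Adj :=
  (List.isChain_split (l₁ := a :: X) (c := c) (l₂ := Y)).2 ⟨h, h'⟩

theorem rot_two {V : Type} {l : List V} {a b : V} (ha : a ∈ l) (hb : b ∈ l) (hab : a ≠ b) :
    ∃ α β, l ~r a :: (α ++ b :: β) := by
  obtain ⟨M, hM⟩ := rot_cons ha
  have : b ∈ M := by
    have := hM.mem_iff.1 hb
    simpa [hab.symm] using this
  obtain ⟨α, β, rfl⟩ := List.append_of_mem this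
  exact ⟨α, β, hM⟩

theorem rot_swap {V : Type} {l α β : List V} {a b : V} (h : l ~r a :: (α ++ b :: β)) :
    l ~r b :: (β ++ a :: α) := by
  refine h.trans ?_
  simpa using List.isRotated_append (l := a :: α) (l' := b :: β)

theorem LCyc.chain_seg {V : Type} {G : SimpleGraph V} {l α β : List V} {a b : V} (hl : LCyc G l)
    (h : l ~r a :: (α ++ b :: β)) : (a :: (α ++ [b])).IsChain G.Adj := by
  have := (hl.rot h).2.2
  rw [Cycle.chain_coe_cons] at this
  exact this.infix ⟨[], β ++ [a], by simp⟩

theorem LMax.repl' {V : Type} {G : SimpleGraph V} {l : List V} (hl : LMax G l)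
    {α β h : List V} {a b : V} (hr : l ~r a :: (α ++ b :: β))
    (hnd : h.Nodup) (hdis : ∀ x ∈ h, x ∉ b :: (β ++ [a])) (hch : (a :: (h ++ [b])).IsChain G.Adj) :
    h.length ≤ α.length := by
  refine hl.repl (A := b :: (β ++ [a])) (g := α) (A1 := β ++ [a]) (A2 := b :: β) (a := a) (b := b)
    ?_ rfl (by simp) hnd hdis hch
  simpa using rot_swap hr

theorem LC_one {V : Type} {G : SimpleGraph V} (h2 : TwoConnected G) {l1 l2 : List V}
    (hl1 : LMax G l1) (hl2 : LMax G l2) {y : V} (hy1 : y ∈ l1) (hy2 : y ∈ l2) :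
    ∃ z, z ≠ y ∧ z ∈ l1 ∧ z ∈ l2 := by
  by_contra hno
  push Not at hno
  obtain ⟨k0, hk0⟩ := hl1.1.exists_LEd hy1
  obtain ⟨c0, hc0⟩ := hl2.1.exists_LEd hy2
  obtain ⟨I0, k', ch, nd, hhd, hyI, hk', hI0⟩ := path_first h2 (fun x => x ∈ l1)
    (hc0.adj hl2.1).ne (hk0.adj hl1.1).ne hk0.mem.2
  have hc0y := (hc0.adj hl2.1).ne
  obtain ⟨J0, c, I, k, J, hP, hc, hc', hk, hI, hch⟩ := trim (fun x => x ∈ l2) (fun x => x ∈ l1) hhd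
    hc0.mem.2 (fun h => hno c0 hc0y h hc0.mem.2) ⟨k', by simp, hk'⟩ ch
  have hky : k ≠ y := by rintro rfl; apply hyI; rw [hP]; simp
  have hcy : c ≠ y := by rintro rfl; apply hyI; rw [hP]; simp
  have nI : I.Nodup := by
    rw [hP] at nd
    exact nd.sublist (List.IsInfix.sublist ⟨J0 ++ [c], k :: J, by simp⟩)
  obtain ⟨α, β, r1⟩ := rot_two hy1 hk hky.symm
  obtain ⟨γ, δ, r2⟩ := rot_two hy2 hc hcy.symm
  have m1 : ∀ x, x ∈ l1 ↔ x ∈ y :: (α ++ k :: β) := fun x => r1.mem_iff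
  have m2 : ∀ x, x ∈ l2 ↔ x ∈ y :: (γ ++ c :: δ) := fun x => r2.mem_iff
  have n2 := r2.nodup_iff.1 hl2.1.1
  have e1 : (γ ++ c :: I).length ≤ α.length := by
    refine hl1.repl' r1 ?_ ?_ ?_
    · simp only [List.nodup_append, List.nodup_cons, List.mem_cons] at *
      grind
    · intro x hx hx'
      have : x ∈ l1 := by rw [m1]; simp at hx' ⊢; tauto
      simp only [List.nodup_append, List.nodup_cons, List.mem_cons, List.mem_append] at *
      grind
    · have := chain_glue (hl2.1.chain_seg r2) hch
      simpa using this
  have e2 : (I.reverse ++ c :: δ).length ≤ β.length := by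
    refine hl1.repl' (rot_swap r1) ?_ ?_ ?_
    · simp only [List.nodup_append, List.nodup_cons, List.mem_cons, List.nodup_reverse, List.mem_reverse] at *
      grind
    · intro x hx hx'
      have : x ∈ l1 := by rw [m1]; simp at hx' ⊢; tauto
      simp only [List.nodup_append, List.nodup_cons, List.mem_cons, List.mem_append, List.mem_reverse] at *
      grind
    · have := List.isChain_split (l₁ := k :: I.reverse) (c := c) (l₂ := δ ++ [y]) (R := G.Adj) |>.2
        ⟨by simpa using chain_rev hch, hl2.1.chain_seg (rot_swap r2)⟩
      simpa using this
  have L1 := r1.perm.length_eq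
  have L2 := r2.perm.length_eq
  have := hl1.2 _ hl2.1
  have := hl2.2 _ hl1.1
  simp at e1 e2 L1 L2
  omega

theorem LC_zero {V : Type} {G : SimpleGraph V} (h2 : TwoConnected G) {l1 l2 : List V}
    (hl1 : LMax G l1) (hl2 : LMax G l2) : ∃ y, y ∈ l1 ∧ y ∈ l2 := by
  by_contra hno
  push Not at hno
  obtain ⟨r0, hr0⟩ := List.exists_mem_of_length_pos (l := l1) (by have := hl1.1.2.1; omega)
  obtain ⟨b, hb⟩ := List.exists_mem_of_length_pos (l := l2) (by have := hl2.1.2.1; omega)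
  obtain ⟨r1, hr1⟩ := hl1.1.exists_LEd hr0
  obtain ⟨b', hb'⟩ := hl2.1.exists_LEd hb
  have hadj := (hr1.adj hl1.1).symm
  have hbr : b ≠ r0 := by rintro rfl; exact hno _ hr0 hb
  obtain ⟨p⟩ := (h2.2 r0).preconnected ⟨r1, hadj.ne'⟩ ⟨b, hbr⟩
  have p' : G.Walk r1 b := p.map (Embedding.induce _).toHom
  have start : DP G (fun x => x ∈ l1) r0 r1 [r0] [r1] := by
    refine ⟨rfl, rfl, by simp, by simp, by simpa using hadj.ne, by simp, by simp, ?_, ?_⟩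
    · simpa using hr0
    · simpa using hr1.mem.2
  obtain ⟨r', P', Q', hD, hadj'⟩ := DP.walk h2 p' _ _ _ start hadj
  obtain ⟨P, Q, hP, hQ, nP, nQ, dis, cP, cQ, kP, kQ⟩ := hD.step h2 hadj' (hb'.adj hl2.1).symm
  have ex : ∀ (P : List V) x, P.head? = some x → (∀ y ∈ P.getLast?, y ∈ l1) →
      ∃ y ∈ P, y ∈ l1 := by
    intro P x hx h
    rcases List.eq_nil_or_concat P with rfl | ⟨M, z, rfl⟩
    · simp at hx
    · exact ⟨z, by simp, h z (by simp)⟩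
  obtain ⟨J1, c1, I1, k1, J1', eP, hc1, hc1', hk1, hI1, ch1⟩ := trim (fun x => x ∈ l2)
    (fun x => x ∈ l1) hP hb (fun h => hno _ h hb) (ex P _ hP kP) cP
  obtain ⟨J2, c2, I2, k2, J2', eQ, hc2, hc2', hk2, hI2, ch2⟩ := trim (fun x => x ∈ l2)
    (fun x => x ∈ l1) hQ hb'.mem.2 (fun h => hno _ h hb'.mem.2) (ex Q _ hQ kQ) cQ
  have sP : ∀ x, x ∈ c1 :: (I1 ++ [k1]) → x ∈ P := by
    intro x hx; rw [eP]; simp at hx ⊢; tauto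
  have sQ : ∀ x, x ∈ c2 :: (I2 ++ [k2]) → x ∈ Q := by
    intro x hx; rw [eQ]; simp at hx ⊢; tauto
  have nP1 : (c1 :: (I1 ++ [k1])).Nodup := by
    rw [eP] at nP
    exact nP.sublist (List.IsInfix.sublist ⟨J1, J1', by simp⟩)
  have nQ1 : (c2 :: (I2 ++ [k2])).Nodup := by
    rw [eQ] at nQ
    exact nQ.sublist (List.IsInfix.sublist ⟨J2, J2', by simp⟩)
  have dis' : ∀ x, x ∈ c1 :: (I1 ++ [k1]) → x ∉ c2 :: (I2 ++ [k2]) :=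
    fun x hx hx' => dis x (sP x hx) (sQ x hx')
  clear sP sQ eP eQ dis nP nQ kP kQ cP cQ hP hQ
  have hkk : k1 ≠ k2 := by rintro rfl; exact dis' k1 (by simp) (by simp)
  have hcc : c1 ≠ c2 := by rintro rfl; exact dis' c1 (by simp) (by simp)
  obtain ⟨α, β, r1⟩ := rot_two hk1 hk2 hkk
  obtain ⟨γ, δ, r2⟩ := rot_two hc1 hc2 hcc
  have m1 : ∀ x, x ∈ l1 ↔ x ∈ k1 :: (α ++ k2 :: β) := fun x => r1.mem_iff
  have m2 : ∀ x, x ∈ l2 ↔ x ∈ c1 :: (γ ++ c2 :: δ) := fun x => r2.mem_iff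
  have n2 := r2.nodup_iff.1 hl2.1.1
  have e1 : (I1.reverse ++ c1 :: (γ ++ c2 :: I2)).length ≤ α.length := by
    refine hl1.repl' r1 ?_ ?_ ?_
    · simp only [List.nodup_append, List.nodup_cons, List.mem_cons, List.nodup_reverse,
        List.mem_reverse, List.mem_append] at *
      grind
    · intro x hx hx'
      have : x ∈ l1 := by rw [m1]; simp at hx' ⊢; tauto
      have : x ∉ l2 := hno x this
      simp only [List.mem_cons, List.mem_append, List.mem_reverse] at *
      grind
    · have h1 := chain_glue (hl2.1.chain_seg r2) ch2
      have := List.isChain_split (l₁ := k1 :: I1.reverse) (c := c1) (R := G.Adj)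
        (l₂ := γ ++ c2 :: (I2 ++ [k2])) |>.2 ⟨by simpa using chain_rev ch1, by simpa using h1⟩
      simpa using this
  have e2 : (I2.reverse ++ c2 :: (δ ++ c1 :: I1)).length ≤ β.length := by
    refine hl1.repl' (rot_swap r1) ?_ ?_ ?_
    · simp only [List.nodup_append, List.nodup_cons, List.mem_cons, List.nodup_reverse,
        List.mem_reverse, List.mem_append] at *
      grind
    · intro x hx hx'
      have : x ∈ l1 := by rw [m1]; simp at hx' ⊢; tauto
      have : x ∉ l2 := hno x this
      simp only [List.mem_cons, List.mem_append, List.mem_reverse] at *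
      grind
    · have h1 := chain_glue (hl2.1.chain_seg (rot_swap r2)) ch1
      have := List.isChain_split (l₁ := k2 :: I2.reverse) (c := c2) (R := G.Adj)
        (l₂ := δ ++ c1 :: (I1 ++ [k1])) |>.2 ⟨by simpa using chain_rev ch2, by simpa using h1⟩
      simpa using this
  have L1 := r1.perm.length_eq
  have L2 := r2.perm.length_eq
  have := hl1.2 _ hl2.1
  have := hl2.2 _ hl1.1
  simp at e1 e2 L1 L2
  omega

theorem LC {V : Type} {G : SimpleGraph V} (h2 : TwoConnected G) {l1 l2 : List V}
    (hl1 : LMax G l1) (hl2 : LMax G l2) :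
    ∃ y z, y ≠ z ∧ y ∈ l1 ∧ y ∈ l2 ∧ z ∈ l1 ∧ z ∈ l2 := by
  obtain ⟨y, h1, h3⟩ := LC_zero h2 hl1 hl2
  obtain ⟨z, hz, h4, h5⟩ := LC_one h2 hl1 hl2 h1 h3
  exact ⟨y, z, hz.symm, h1, h3, h4, h5⟩


/-- `t` lies in the core of the cycle `l`. -/
def LHit {V W : Type} {G : SimpleGraph V} {T : SimpleGraph W} (R : TreeRep G T) (l : List V)
    (t : W) : Prop := ∃ a b, LEd l a b ∧ t ∈ R.S a ∧ t ∈ R.S b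

theorem LHit.mem {V W : Type} {G : SimpleGraph V} {T : SimpleGraph W} {R : TreeRep G T}
    {l : List V} {t : W} {w : V} (hl : LMax G l) (h : LHit R l t) (hw : t ∈ R.S w) : w ∈ l := by
  obtain ⟨a, b, hab, ha, hb⟩ := h
  by_contra hwl
  have hwa : w ≠ a := by rintro rfl; exact hwl hab.mem.1
  have hwb : w ≠ b := by rintro rfl; exact hwl hab.mem.2
  obtain ⟨M, hM⟩ := hab
  have := hl.repl (A := a :: (M ++ [b])) (g := []) (A1 := M ++ [b]) (A2 := a :: M) (a := b)
    (b := a) (h := [w]) (by simpa using hM) rfl (by simp) (by simp)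
    (by simpa [hM.mem_iff] using hwl) (by
      simp only [List.cons_append, List.nil_append, List.isChain_cons_cons, List.isChain_singleton,
        and_true]
      exact ⟨(R.adj_iff b w hwb.symm).2 ⟨t, hb, hw⟩, (R.adj_iff w a hwa).2 ⟨t, hw, ha⟩⟩)
  simp at this

theorem exists_hit {V W : Type} {G : SimpleGraph V} {T : SimpleGraph W} (R : TreeRep G T)
    {l : List V} {v : V} (hl : LCyc G l) (hv : v ∈ l) : ∃ t ∈ R.S v, LHit R l t := by
  obtain ⟨b, hb⟩ := hl.exists_LEd hv
  have hadj := hb.adj hl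
  obtain ⟨t, h1, h2⟩ := (R.adj_iff b v hadj.ne).1 hadj
  exact ⟨t, h2, v, b, hb, h2, h1⟩

theorem LEd.hit {V W : Type} {G : SimpleGraph V} {T : SimpleGraph W} (R : TreeRep G T)
    {l : List V} {a b : V} (hl : LCyc G l) (h : LEd l a b) :
    ∃ t, t ∈ R.S a ∧ t ∈ R.S b ∧ LHit R l t := by
  have hadj := h.adj hl
  obtain ⟨t, h1, h2⟩ := (R.adj_iff b a hadj.ne).1 hadj
  exact ⟨t, h2, h1, a, b, h, h2, h1⟩

theorem seg_prop {V : Type} {l : List V} {Y P : V → Prop}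
    (hp : ∀ a b, LEd l a b → ¬ Y a → ¬ Y b → (P a ↔ P b)) :
    ∀ (N U : List V), l ~r U ++ N → (∀ v ∈ N, ¬ Y v) → ∀ x ∈ N, ∀ y ∈ N, (P x ↔ P y)
  | [], _, _, _ => by simp
  | [a], _, _, _ => by simp
  | a :: b :: N, U, hr, hY => by
    have ih := seg_prop hp (b :: N) (U ++ [a]) (by simpa using hr)
      (fun v hv => hY v (List.mem_cons_of_mem _ hv))
    have hab := hp b a (LEd.of_append hr) (hY b (by simp)) (hY a (by simp))
    have key : ∀ x ∈ a :: b :: N, (P x ↔ P b) := by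
      intro x hx
      rcases List.mem_cons.1 hx with rfl | hx
      · exact hab.symm
      · exact ih x hx b (by simp)
    intro x hx y hy
    rw [key x hx, key y hy]

theorem CH {V : Type} {l : List V} {Y P : V → Prop} (hnd : l.Nodup)
    (hp : ∀ a b, LEd l a b → ¬ Y a → ¬ Y b → (P a ↔ P b))
    (hu : ∀ a ∈ l, ∀ b ∈ l, Y a → Y b → a = b) {v0 : V} (hv0 : v0 ∈ l) (hy0 : ¬ Y v0)
    (hP : P v0) : ∀ v ∈ l, ¬ Y v → P v := by
  intro v hv hyv
  by_cases hex : ∃ y ∈ l, Y y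
  · obtain ⟨y, hy, hYy⟩ := hex
    obtain ⟨N, hN⟩ := rot_cons hy
    have hn := hN.nodup_iff.1 hnd
    have mN : ∀ x ∈ l, ¬ Y x → x ∈ N := by
      intro x hx hYx
      rcases List.mem_cons.1 (hN.mem_iff.1 hx) with rfl | h
      · exact absurd hYy hYx
      · exact h
    refine (seg_prop hp N [y] hN ?_ v0 (mN _ hv0 hy0) v (mN _ hv hyv)).1 hP
    intro x hx hYx
    have : x = y := hu x (hN.mem_iff.2 (List.mem_cons_of_mem _ hx)) y hy hYx hYy
    subst this
    simp [hx] at hn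
  · push Not at hex
    exact (seg_prop hp l [] (List.IsRotated.refl _) hex v0 hv0 v hv).1 hP

theorem ear_seg {V : Type} {G : SimpleGraph V} {l : List V} {Y : V → Prop} (hl : LCyc G l)
    {v0 y1 y2 : V} (hv0 : v0 ∈ l) (hy0 : ¬ Y v0) (h1 : y1 ∈ l) (h2 : y2 ∈ l) (hne : y1 ≠ y2)
    (hY1 : Y y1) (hY2 : Y y2) :
    ∃ a b J g, l ~r (a :: (J ++ [b])) ++ g ∧ Y a ∧ Y b ∧ a ≠ b ∧ v0 ∈ g ∧ (∀ x ∈ g, ¬ Y x) ∧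
      g.Nodup ∧ (b :: (g ++ [a])).IsChain G.Adj := by
  obtain ⟨N, hN⟩ := rot_cons hv0
  have hn := hN.nodup_iff.1 hl.1
  have mN : ∀ x ∈ l, Y x → x ∈ N := by
    intro x hx hYx
    rcases List.mem_cons.1 (hN.mem_iff.1 hx) with rfl | h
    · exact absurd hYx hy0
    · exact h
  obtain ⟨I, a, N', rfl, hYa, hI⟩ := list_split_first Y N ⟨y1, mN _ h1 hY1, hY1⟩
  have hex : ∃ x ∈ N', Y x := by
    have m1 := mN _ h1 hY1
    have m2 := mN _ h2 hY2
    simp only [List.mem_append, List.mem_cons] at m1 m2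
    by_cases e : y1 = a
    · exact ⟨y2, by grind, hY2⟩
    · exact ⟨y1, by grind, hY1⟩
  obtain ⟨J, b, I', rfl, hYb, hI'⟩ := list_split_last Y N' hex
  have r2 : l ~r b :: ((I' ++ v0 :: I) ++ a :: J) := by
    refine hN.trans ?_
    simpa using List.isRotated_append (l := v0 :: (I ++ a :: J)) (l' := b :: I')
  have r3 : l ~r (a :: (J ++ [b])) ++ (I' ++ v0 :: I) := by
    refine hN.trans ?_
    simpa using List.isRotated_append (l := v0 :: I) (l' := a :: (J ++ b :: I'))
  refine ⟨a, b, J, I' ++ v0 :: I, r3, hYa, hYb, ?_, by simp, ?_, ?_, hl.chain_seg r2⟩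
  · rintro rfl
    have := r2.nodup_iff.1 hl.1
    simp at this
  · intro x hx
    simp only [List.mem_append, List.mem_cons] at hx
    rcases hx with h | rfl | h
    · exact hI' x h
    · exact hy0
    · exact hI x h
  · exact (List.nodup_append'.1 (r3.nodup_iff.1 hl.1)).2.1

theorem SPAN {V W : Type} {G : SimpleGraph V} {T : SimpleGraph W} (R : TreeRep G T) (lam : W → ℕ)
    {l : List V} {α β : ℕ} (hl : LCyc G l)
    (hd : ∀ t, LHit R l t → lam t ≤ α ∨ β ≤ lam t)
    (hlo : ∃ t, LHit R l t ∧ lam t ≤ α) (hhi : ∃ t, LHit R l t ∧ β ≤ lam t) :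
    ∃ v w, v ≠ w ∧ v ∈ l ∧ w ∈ l ∧ (∃ s ∈ R.S v, lam s ≤ α) ∧ (∃ s ∈ R.S v, β ≤ lam s) ∧
      (∃ s ∈ R.S w, lam s ≤ α) ∧ (∃ s ∈ R.S w, β ≤ lam s) := by
  by_contra hno
  have hu : ∀ a ∈ l, ∀ b ∈ l, ((∃ s ∈ R.S a, lam s ≤ α) ∧ (∃ s ∈ R.S a, β ≤ lam s)) →
      ((∃ s ∈ R.S b, lam s ≤ α) ∧ (∃ s ∈ R.S b, β ≤ lam s)) → a = b := by
    intro a ha b hb h1 h2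
    by_contra hne
    exact hno ⟨a, b, hne, ha, hb, h1.1, h1.2, h2.1, h2.2⟩
  have pick : ∀ t, LHit R l t → ∃ a ∈ l, t ∈ R.S a ∧
      ¬ ((∃ s ∈ R.S a, lam s ≤ α) ∧ (∃ s ∈ R.S a, β ≤ lam s)) := by
    rintro t ⟨a, b, hE, ha, hb⟩
    by_cases hYa : (∃ s ∈ R.S a, lam s ≤ α) ∧ (∃ s ∈ R.S a, β ≤ lam s)
    · refine ⟨b, hE.mem.2, hb, fun hYb => ?_⟩
      exact (hE.adj hl).ne (hu a hE.mem.1 b hE.mem.2 hYa hYb).symm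
    · exact ⟨a, hE.mem.1, ha, hYa⟩
  obtain ⟨t1, h1, h1'⟩ := hlo
  obtain ⟨t2, h2, h2'⟩ := hhi
  obtain ⟨a1, ha1, hta1, hY1⟩ := pick t1 h1
  obtain ⟨a2, ha2, hta2, hY2⟩ := pick t2 h2
  have := CH (P := fun v => ∃ s ∈ R.S v, lam s ≤ α) hl.1 ?_ hu ha1 hY1 ⟨t1, hta1, h1'⟩ a2 ha2 hY2
  · exact hY2 ⟨this, t2, hta2, h2'⟩
  · intro a b hE hYa hYb
    obtain ⟨t, hta, htb, hh⟩ := hE.hit R hl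
    rcases hd t hh with h | h
    · exact ⟨fun _ => ⟨t, htb, h⟩, fun _ => ⟨t, hta, h⟩⟩
    · exact ⟨fun hx => absurd ⟨hx, t, hta, h⟩ hYa, fun hx => absurd ⟨hx, t, htb, h⟩ hYb⟩


open Classical in
/-- Length of the common prefix of two lists. -/
noncomputable def cpl {W : Type} : List W → List W → ℕ
  | a :: L, b :: M => if a = b then cpl L M + 1 else 0
  | [], _ => 0
  | _ :: _, [] => 0

theorem cpl_le {W : Type} : ∀ (L M : List W), cpl L M ≤ L.length
  | [], M => by simp [cpl]
  | a :: L, [] => by simp [cpl]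
  | a :: L, b :: M => by
    have := cpl_le L M
    simp only [cpl, List.length_cons]
    split_ifs <;> omega

theorem cpl_prefix {W : Type} : ∀ (L M : List W), M <+: L → cpl L M = M.length
  | L, [], _ => by cases L <;> simp [cpl]
  | [], b :: M, h => by simp at h
  | a :: L, b :: M, h => by
    rw [List.cons_prefix_cons] at h
    simp [cpl, h.1, cpl_prefix L M h.2]

theorem cpl_concat {W : Type} : ∀ (L M : List W) (c : W), cpl L (M ++ [c]) = cpl L M ∨
    (cpl L M = M.length ∧ cpl L (M ++ [c]) = M.length + 1 ∧ M ++ [c] <+: L)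
  | [], M, c => by simp [cpl]
  | a :: L, [], c => by
    by_cases h : a = c
    · right; subst h; cases L <;> simp [cpl]
    · left; simp [cpl, h]
  | a :: L, b :: M, c => by
    by_cases h : a = b
    · subst h
      rcases cpl_concat L M c with h | ⟨h1, h2, h3⟩
      · left; simp [cpl, h]
      · right
        refine ⟨by simp [cpl, h1], by simp [cpl, h2], ?_⟩
        rw [List.cons_append, List.cons_prefix_cons]
        exact ⟨rfl, h3⟩
    · left; simp [cpl, h]

/-- Level function data along a path with vertex set `D`, inside the branch `X`. -/
structure Lvl {W : Type} (T : SimpleGraph W) (X D : Set W) (q : ℕ → W) (n : ℕ) (lam : W → ℕ) :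
    Prop where
  l1 : ∀ s s', T.Adj s s' → lam s ≤ lam s' → lam s = lam s' ∨
    (lam s' = lam s + 1 ∧ s' = q (lam s') ∧ (1 ≤ lam s → s = q (lam s)))
  l2 : ∀ t, 1 ≤ lam t ↔ t ∈ X
  l3 : ∀ t ∈ D, t = q (lam t)
  lq : ∀ j, 1 ≤ j → j ≤ n → lam (q j) = j
  qD : ∀ j, 1 ≤ j → j ≤ n → q j ∈ D
  l4 : ∀ t, lam t ≤ n
  sub : D ⊆ X

theorem exists_lvl {W : Type} {T : SimpleGraph W} (hT : T.IsTree) {X : Set W} {x z : W}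
    (hx : x ∈ X) (hbr : ∀ a b, a ∈ X → b ∉ X → T.Adj a b → a = x) (p : T.Walk x z)
    (hp : p.IsPath) (hpX : ∀ w ∈ p.support, w ∈ X) :
    ∃ lam, Lvl T X {w | w ∈ p.support} (fun j => p.getVert (j - 1)) (p.length + 1) lam := by
  classical
  have hex : ∀ t, ∃ r : T.Walk x t, r.IsPath := fun t => hT.1.exists_isPath x t
  choose tp htp using hex
  have huniq : ∀ t (r : T.Walk x t), r.IsPath → r = tp t := by
    intro t r hr
    exact (hT.existsUnique_path x t).unique hr (htp t)
  set c : W → ℕ := fun t => cpl p.support (tp t).support with hc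
  have hpsupp : ∀ n, n ≤ p.length → p.support[n]? = some (p.getVert n) := by
    intro n hn
    rw [Walk.getVert_eq_support_getElem p hn]
    simp
  have hext : ∀ s s', T.Adj s s' → (tp s').support = (tp s).support ++ [s'] ∨
      (tp s).support = (tp s').support ++ [s] := by
    intro s s' hadj
    by_cases hs : s' ∈ (tp s).support
    · right
      have h1 := huniq s' ((tp s).takeUntil s' hs) ((htp s).takeUntil hs)
      have h2 : s ∉ (tp s').support := by
        rw [← h1]
        exact Walk.endpoint_notMem_support_takeUntil (htp s) hs hadj.ne
      have h3 := huniq s ((tp s').concat hadj.symm) ((Walk.concat_isPath_iff _).2 ⟨htp s', h2⟩)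
      rw [← h3, Walk.support_concat]
    · left
      have h3 := huniq s' ((tp s).concat hadj) ((Walk.concat_isPath_iff _).2 ⟨htp s, hs⟩)
      rw [← h3, Walk.support_concat]
  have hstep : ∀ s s', T.Adj s s' → (tp s').support = (tp s).support ++ [s'] →
      c s' = c s ∨ (c s' = c s + 1 ∧ s' = p.getVert (c s' - 1) ∧ s = p.getVert (c s - 1)) := by
    intro s s' hadj h
    rcases cpl_concat p.support (tp s).support s' with h1 | ⟨h1, h2, h3⟩
    · left; simp only [hc]; rw [h, h1]
    · right
      have hlen : (tp s).support.length = (tp s).length + 1 := by simp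
      have hle := h3.length_le
      simp only [List.length_append, List.length_singleton, Walk.length_support] at hle
      have e1 : c s = (tp s).length + 1 := by simp only [hc]; rw [h1, hlen]
      have e2 : c s' = (tp s).length + 2 := by simp only [hc]; rw [h, h2, hlen]
      refine ⟨by omega, ?_, ?_⟩
      · have := hpsupp ((tp s).length + 1) (by omega)
        obtain ⟨Z, hZ⟩ := h3
        rw [← hZ] at this
        rw [e2]
        simp at this
        simpa using this
      · have := hpsupp ((tp s).length) (by omega)
        obtain ⟨Z, hZ⟩ := h3
        rw [← hZ, List.append_assoc, List.getElem?_append_left (by simp)] at this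
        rw [e1]
        have h5 : (tp s).support[(tp s).length]? = some s := by simp
        rw [h5] at this
        simpa using this
  have hpos : ∀ t, 1 ≤ c t := by
    intro t
    simp only [hc]
    rw [← p.cons_tail_support, ← (tp t).cons_tail_support]
    simp [cpl]
  have hprefix : ∀ j, j ≤ p.length → c (p.getVert j) = j + 1 := by
    intro j hj
    have h := huniq _ (p.take j) (hp.take j)
    simp only [hc]
    rw [← h, cpl_prefix]
    · simp [hj]
    · rw [Walk.support_take]
      exact List.take_prefix _ _
  have hle : ∀ t, c t ≤ p.length + 1 := by
    intro t
    have := cpl_le p.support (tp t).support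
    simpa using this
  refine ⟨fun t => if t ∈ X then c t else 0, ?_, ?_, ?_, ?_, ?_, ?_, hpX⟩
  · intro s s' hadj
    by_cases hs : s ∈ X <;> by_cases hs' : s' ∈ X
    · simp only [hs, hs', if_true]
      intro hle
      rcases hext s s' hadj with h | h
      · rcases hstep s s' hadj h with h | ⟨h1, h2, h3⟩
        · exact Or.inl h.symm
        · exact Or.inr ⟨h1, h2, fun _ => h3⟩
      · rcases hstep s' s hadj.symm h with h | ⟨h1, h2, h3⟩
        · exact Or.inl h
        · omega
    · simp only [hs, hs', if_true, if_false]
      intro h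
      have := hpos s
      omega
    · simp only [hs, hs', if_true, if_false]
      intro _
      right
      obtain rfl := hbr s' s hs' hs hadj.symm
      have := hprefix 0 (by omega)
      simp at this
      simp [this]
    · simp [hs, hs']
  · intro t
    by_cases ht : t ∈ X
    · simpa [ht] using hpos t
    · simp [ht]
  · intro t ht
    have htX := hpX t ht
    simp only [htX, if_true]
    obtain ⟨j, rfl, hj⟩ := Walk.mem_support_iff_exists_getVert.1 ht
    rw [hprefix j hj]
    simp
  · intro j h1 h2
    have : p.getVert (j - 1) ∈ X := hpX _ (p.getVert_mem_support _)
    simp only [this, if_true]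
    rw [hprefix (j - 1) (by omega)]
    omega
  · intro j h1 h2
    exact p.getVert_mem_support _
  · intro t
    by_cases ht : t ∈ X
    · simpa [ht] using hle t
    · simp [ht]


theorem conn_closed {W : Type} {T : SimpleGraph W} {S : Set W} (hS : (T.induce S).Connected)
    {Z : W → Prop} {s0 : W} (h0 : s0 ∈ S) (hZ : Z s0)
    (hcl : ∀ a b, a ∈ S → b ∈ S → Z a → T.Adj a b → Z b) : ∀ s ∈ S, Z s := by
  intro s hs
  obtain ⟨p⟩ := hS.preconnected ⟨s0, h0⟩ ⟨s, hs⟩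
  have key : ∀ (a b : S) (p : (T.induce S).Walk a b), Z a → Z b := by
    intro a b p
    induction p with
    | nil => exact id
    | cons hadj p ih => intro h; exact ih (hcl _ _ (Subtype.property _) (Subtype.property _) h hadj)
  exact key _ _ p hZ

theorem Lvl.cross {W : Type} {T : SimpleGraph W} {X D : Set W} {q : ℕ → W} {n : ℕ} {lam : W → ℕ}
    (h : Lvl T X D q n lam) {S : Set W} (hS : (T.induce S).Connected) {s t : W} (hs : s ∈ S)
    (ht : t ∈ S) {j : ℕ} (hlt : lam s < lam t) (hj : 1 ≤ j) (h1 : lam s ≤ j) (h2 : j ≤ lam t) :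
    q j ∈ S := by
  by_contra hq
  rcases Nat.eq_or_lt_of_le h1 with e | e
  · have := conn_closed hS (Z := fun r => lam r ≤ j) hs h1 (by
      intro a b ha hb hZa hadj
      by_contra hb'
      rcases h.l1 a b hadj (by omega) with h3 | ⟨h3, h4, h5⟩
      · omega
      · have h6 : lam a = j := by omega
        have := h5 (by omega)
        rw [h6] at this
        exact hq (this ▸ ha)) t ht
    omega
  · have := conn_closed hS (Z := fun r => lam r < j) hs e (by
      intro a b ha hb hZa hadj
      by_contra hb'
      rcases h.l1 a b hadj (by omega) with h3 | ⟨h3, h4, h5⟩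
      · omega
      · have h6 : lam b = j := by omega
        rw [h6] at h4
        exact hq (h4 ▸ hb)) t ht
    omega

theorem exists_comp {W : Type} (T : SimpleGraph W) {s : Set W} {t : W} (ht : t ∈ s) :
    ∃ E, IsCompOf T s E ∧ t ∈ E := by
  refine ⟨{w | ∃ p : T.Walk t w, ∀ a ∈ p.support, a ∈ s}, ⟨⟨t, Walk.nil, by simpa using ht⟩, ?_, ?_, ?_⟩,
    Walk.nil, by simpa using ht⟩
  · rintro w ⟨p, hp⟩
    exact hp w p.end_mem_support
  · refine induce_connected_of_patches t ⟨Walk.nil, by simpa using ht⟩ ?_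
    rintro w ⟨p, hp⟩
    classical
    refine ⟨{v | v ∈ p.support}, ?_, p.start_mem_support, p.end_mem_support,
      p.connected_induce_support.preconnected _ _⟩
    intro v hv
    exact ⟨p.takeUntil v hv, fun a ha => hp a (p.support_takeUntil_subset_support hv ha)⟩
  · rintro a b ⟨p, hp⟩ hb hadj
    refine ⟨p.concat hadj, fun c hc => ?_⟩
    rw [Walk.support_concat] at hc
    simp only [List.mem_append, List.mem_singleton] at hc
    rcases hc with hc | rfl
    · exact hp c hc
    · exact hb

theorem Lvl.comp {W : Type} {T : SimpleGraph W} {X D : Set W} {q : ℕ → W} {n : ℕ} {lam : W → ℕ}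
    (h : Lvl T X D q n lam) {E : Set W} (hE : IsCompOf T (X \ D) E) {t : W} (ht : t ∈ E) :
    (∀ e ∈ E, lam e = lam t) ∧ (∀ a b, a ∈ E → b ∉ E → T.Adj a b → b = q (lam t)) ∧
      q (lam t) ∈ D ∧ q (lam t) ∉ E := by
  obtain ⟨-, hsub, hconn, hcl⟩ := hE
  have hq : ∀ t ∈ X, q (lam t) ∈ D := fun t ht => h.qD _ ((h.l2 t).2 ht) (h.l4 t)
  have hne : ∀ a ∈ E, a ≠ q (lam a) := by
    intro a ha he
    apply (hsub ha).2
    rw [he]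
    exact hq a (hsub ha).1
  have hlev : ∀ e ∈ E, lam e = lam t := by
    refine conn_closed hconn ht rfl ?_
    intro a b ha hb hZ hadj
    rcases le_total (lam a) (lam b) with hle | hle
    · rcases h.l1 a b hadj hle with h3 | ⟨h3, h4, h5⟩
      · omega
      · exact absurd h4 (hne b hb)
    · rcases h.l1 b a hadj.symm hle with h3 | ⟨h3, h4, h5⟩
      · omega
      · exact absurd h4 (hne a ha)
  refine ⟨hlev, ?_, hq t (hsub ht).1, fun hh => (hsub hh).2 (hq t (hsub ht).1)⟩
  intro a b ha hb hadj
  have hbs : b ∉ X \ D := fun hh => hb (hcl ha hh hadj)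
  have hla := (h.l2 a).2 (hsub ha).1
  have h7 := hlev a ha
  have heq : lam a = lam b := by
    rcases le_total (lam a) (lam b) with hle | hle
    · rcases h.l1 a b hadj hle with h3 | ⟨h3, h4, h5⟩
      · omega
      · exact absurd (h5 hla) (hne a ha)
    · rcases h.l1 b a hadj.symm hle with h3 | ⟨h3, h4, h5⟩
      · omega
      · exact absurd h4 (hne a ha)
  have hbX : b ∈ X := (h.l2 b).1 (by omega)
  have hbD : b ∈ D := by
    by_contra hh
    exact hbs ⟨hbX, hh⟩
  have := h.l3 b hbD
  rw [this, ← heq, h7]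

theorem Lvl.sub_comp {W : Type} {T : SimpleGraph W} {X D : Set W} {q : ℕ → W} {n : ℕ}
    {lam : W → ℕ} (h : Lvl T X D q n lam) {E : Set W} (hE : IsCompOf T (X \ D) E) {t : W}
    (ht : t ∈ E) {S : Set W} (hS : (T.induce S).Connected) (htS : t ∈ S) (hq : q (lam t) ∉ S) :
    S ⊆ E := by
  intro s hs
  refine conn_closed hS (Z := fun r => r ∈ E) htS ht ?_ s hs
  intro a b ha hb haE hadj
  by_contra hbE
  exact hq ((h.comp hE ht).2.1 a b haE hbE hadj ▸ hb)

theorem Lvl.root {W : Type} {T : SimpleGraph W} (hT : T.IsTree) {X D : Set W} {q : ℕ → W} {n : ℕ}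
    {lam : W → ℕ} (h : Lvl T X D q n lam) {E : Set W} (hE : IsCompOf T (X \ D) E) :
    ∃ x' ∈ E, (∃ u ∈ D, T.Adj u x') ∧ ∀ a b, a ∈ E → b ∉ E → T.Adj a b → a = x' := by
  obtain ⟨t, ht⟩ := hE.1
  obtain ⟨hlev, hbd, hqD, hqE⟩ := h.comp hE ht
  obtain ⟨p⟩ := hT.1.preconnected t (q (lam t))
  obtain ⟨d, -, hd1, hd2⟩ := p.exists_boundary_dart E ht hqE
  have hadj : T.Adj d.fst (q (lam t)) := hbd _ _ hd1 hd2 d.adj ▸ d.adj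
  refine ⟨d.fst, hd1, ⟨q (lam t), hqD, hadj.symm⟩, ?_⟩
  intro a b ha hb hab
  have hab' : T.Adj a (q (lam t)) := hbd _ _ ha hb hab ▸ hab
  by_contra hne
  obtain ⟨r, hr⟩ := hE.2.2.1.exists_isPath ⟨a, ha⟩ ⟨d.fst, hd1⟩
  let r' : T.Walk a d.fst := r.map (Embedding.induce E).toHom
  have hr' : r'.IsPath := Walk.IsPath.map (f := (Embedding.induce (G := T) E).toHom) (Embedding.induce (G := T) E).injective hr
  let s : T.Walk a d.fst := Walk.cons hab' (Walk.cons hadj.symm Walk.nil)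
  have hs : s.IsPath := by
    simp only [s, Walk.cons_isPath_iff, Walk.IsPath.nil, Walk.support_cons, Walk.support_nil,
      List.mem_cons, List.not_mem_nil, or_false, not_or, true_and]
    exact ⟨hadj.ne', hab'.ne, hne⟩
  have he : r' = s := (hT.existsUnique_path a d.fst).unique hr' hs
  have hm : q (lam t) ∈ r'.support := by rw [he]; simp [s]
  have hsm : r'.support = r.support.map (Embedding.induce (G := T) E).toHom :=
    Walk.support_map _ _
  rw [hsm] at hm
  obtain ⟨w, -, hw⟩ := List.mem_map.1 hm
  exact hqE (hw ▸ w.2)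


theorem round_case0 {V W : Type} {G : SimpleGraph V} {T : SimpleGraph W} (h2 : TwoConnected G)
    (R : TreeRep G T) {X D : Set W} {q : ℕ → W} {n : ℕ} {lam : W → ℕ} (hL : Lvl T X D q n lam)
    {l l' : List V} (hl : LMax G l) (hl' : LMax G l') {E : Set W} (hE : IsCompOf T (X \ D) E)
    {t : W} (ht : t ∈ E) (hit : LHit R l t)
    (hu : ∀ a ∈ l, ∀ b ∈ l, q (lam t) ∈ R.S a → q (lam t) ∈ R.S b → a = b) :
    ∃ t' ∈ E, LHit R l' t' := by
  have hlev := (hL.comp hE ht).1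
  have hsub : ∀ v s, s ∈ E → s ∈ R.S v → q (lam t) ∉ R.S v → R.S v ⊆ E := by
    intro v s hs hsv hq
    exact hL.sub_comp hE hs (R.subtree_connected v) hsv (by rw [hlev s hs]; exact hq)
  obtain ⟨v0, hv0, hYv0, hPv0⟩ : ∃ v0 ∈ l, q (lam t) ∉ R.S v0 ∧ R.S v0 ⊆ E := by
    obtain ⟨a, b, hab, ha, hb⟩ := hit
    by_cases hYa : q (lam t) ∈ R.S a
    · have hYb : q (lam t) ∉ R.S b := fun hYb =>
        (hab.adj hl.1).ne (hu a hab.mem.1 b hab.mem.2 hYa hYb).symm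
      exact ⟨b, hab.mem.2, hYb, hsub b t ht hb hYb⟩
    · exact ⟨a, hab.mem.1, hYa, hsub a t ht ha hYa⟩
  have hall := CH (P := fun v => R.S v ⊆ E) (Y := fun v => q (lam t) ∈ R.S v) hl.1.1 (by
    intro a b hab hYa hYb
    obtain ⟨s, hsa, hsb, -⟩ := hab.hit R hl.1
    exact ⟨fun h => hsub b s (h hsa) hsb hYb, fun h => hsub a s (h hsb) hsa hYa⟩) hu hv0 hYv0 hPv0
  obtain ⟨y, z, hyz, hy, hy', hz, hz'⟩ := LC h2 hl hl'
  have : ∃ w, w ∈ l ∧ w ∈ l' ∧ q (lam t) ∉ R.S w := by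
    by_cases hYy : q (lam t) ∈ R.S y
    · exact ⟨z, hz, hz', fun h => hyz (hu y hy z hz hYy h)⟩
    · exact ⟨y, hy, hy', hYy⟩
  obtain ⟨w, hw, hw', hYw⟩ := this
  obtain ⟨t', ht', hh⟩ := exists_hit R hl'.1 hw'
  exact ⟨t', hall w hw hYw ht', hh⟩

/-- An ear at level `j` in the component `E`. -/
structure Ear {V W : Type} {G : SimpleGraph V} {T : SimpleGraph W} (R : TreeRep G T) (X D : Set W)
    (q : ℕ → W) (lam : W → ℕ) (j : ℕ) (E : Set W) (u v : V) (f : List V) : Prop where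
  comp : IsCompOf T (X \ D) E
  lev : ∀ e ∈ E, lam e = j
  ne : u ≠ v
  hu : q j ∈ R.S u
  hv : q j ∈ R.S v
  nd : f.Nodup
  sub : ∀ w ∈ f, R.S w ⊆ E
  ch : (u :: (f ++ [v])).IsChain G.Adj

theorem get_ear {V W : Type} {G : SimpleGraph V} {T : SimpleGraph W}
    (R : TreeRep G T) {X D : Set W} {q : ℕ → W} {n : ℕ} {lam : W → ℕ} (hL : Lvl T X D q n lam)
    {l : List V} (hl : LMax G l) {t : W} (hit : LHit R l t) (htX : t ∈ X) {y : V}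
    (hy : q (lam t) ∈ R.S y) (hyl : y ∉ l)
    (hC : ∀ E, IsCompOf T (X \ D) E → t ∈ E →
      ∃ a ∈ l, ∃ b ∈ l, a ≠ b ∧ q (lam t) ∈ R.S a ∧ q (lam t) ∈ R.S b) :
    ∃ E a b J g, Ear R X D q lam (lam t) E b a g ∧ l ~r (a :: (J ++ [b])) ++ g := by
  have hnq : ¬ LHit R l (q (lam t)) := fun h => hyl (h.mem hl hy)
  have htD : t ∉ D := by
    intro h
    have := hL.l3 t h
    rw [← this] at hnq
    exact hnq hit
  obtain ⟨E, hE, htE⟩ := exists_comp T (s := X \ D) ⟨htX, htD⟩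
  obtain ⟨y1, hy1, y2, hy2, hne, hY1, hY2⟩ := hC E hE htE
  have hlev := (hL.comp hE htE).1
  have hsub : ∀ v s, s ∈ E → s ∈ R.S v → q (lam t) ∉ R.S v → R.S v ⊆ E := by
    intro v s hs hsv hq
    exact hL.sub_comp hE hs (R.subtree_connected v) hsv (by rw [hlev s hs]; exact hq)
  obtain ⟨v0, hv0, hYv0, hPv0⟩ : ∃ v0 ∈ l, q (lam t) ∉ R.S v0 ∧ R.S v0 ⊆ E := by
    obtain ⟨a, b, hab, ha, hb⟩ := hit
    by_cases hYa : q (lam t) ∈ R.S a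
    · have hYb : q (lam t) ∉ R.S b := fun hYb => hnq ⟨a, b, hab, hYa, hYb⟩
      exact ⟨b, hab.mem.2, hYb, hsub b t htE hb hYb⟩
    · exact ⟨a, hab.mem.1, hYa, hsub a t htE ha hYa⟩
  obtain ⟨a, b, J, g, hr, hYa, hYb, hab, hv0g, hg, hgn, hgc⟩ := ear_seg
    (Y := fun v => q (lam t) ∈ R.S v) hl.1 hv0 hYv0 hy1 hy2 hne hY1 hY2
  refine ⟨E, a, b, J, g, ⟨hE, hlev, hab.symm, hYb, hYa, hgn, ?_, hgc⟩, hr⟩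
  intro w hw
  refine (seg_prop (P := fun v => R.S v ⊆ E) (Y := fun v => q (lam t) ∈ R.S v) ?_ g _ hr hg
    v0 hv0g w hw).1 hPv0
  intro a b hab hYa hYb
  obtain ⟨s, hsa, hsb, -⟩ := hab.hit R hl.1
  exact ⟨fun h => hsub b s (h hsa) hsb hYb, fun h => hsub a s (h hsb) hsa hYa⟩

theorem TreeRep.adj_of {V W : Type} {G : SimpleGraph V} {T : SimpleGraph W} (R : TreeRep G T)
    {u v : V} {t : W} (h : u ≠ v) (hu : t ∈ R.S u) (hv : t ∈ R.S v) : G.Adj u v :=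
  (R.adj_iff u v h).2 ⟨t, hu, hv⟩

theorem conn_list {V W : Type} {G : SimpleGraph V} {T : SimpleGraph W} (R : TreeRep G T)
    {b y u : V} {s t : W} (hby : b ≠ y) (hb : s ∈ R.S b) (hy : s ∈ R.S y) (hy' : t ∈ R.S y)
    (hu : t ∈ R.S u) : ∃ pre : List V, (∀ x ∈ pre, x = y ∧ x ≠ u) ∧ pre.Nodup ∧
      (b :: (pre ++ [u])).IsChain G.Adj := by
  by_cases h : y = u
  · subst h
    exact ⟨[], by simp, by simp, by simpa using R.adj_of hby hb hy⟩
  · exact ⟨[y], by simpa using h, by simp, by simpa using ⟨R.adj_of hby hb hy, R.adj_of h hy' hu⟩⟩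

theorem ear_repl_aux {V W : Type} {G : SimpleGraph V} {T : SimpleGraph W}
    (R : TreeRep G T) {X D : Set W} {q : ℕ → W} {lam : W → ℕ}
    {l : List V} (hl : LMax G l) {a b u v : V} {J g f pre post : List V} {jf : ℕ} {Ef : Set W}
    (hf : Ear R X D q lam jf Ef u v f) (hr : l ~r (a :: (J ++ [b])) ++ g)
    (hle : g.length ≤ f.length) (hqE : q jf ∉ Ef)
    (hul : u ∉ l) (hvl : v ∉ l) (hfl : ∀ w ∈ f, w ∉ l)
    (hpre : ∀ x ∈ pre, x ≠ u ∧ x ≠ v ∧ x ∉ l ∧ q jf ∈ R.S x)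
    (hpost : ∀ x ∈ post, x ≠ u ∧ x ≠ v ∧ x ∉ l ∧ q jf ∈ R.S x)
    (hpp : ∀ x ∈ pre, x ∉ post) (npre : pre.Nodup) (npost : post.Nodup)
    (c1 : (b :: (pre ++ [u])).IsChain G.Adj) (c2 : (v :: (post ++ [a])).IsChain G.Adj) : False := by
  have hnf : ∀ x, q jf ∈ R.S x → x ∉ f := fun x hx hxf => hqE (hf.sub x hxf hx)
  have huf := hnf u hf.hu
  have hvf := hnf v hf.hv
  have huv := hf.ne
  have hnd := hf.nd
  have hc : (b :: (pre ++ u :: (f ++ v :: (post ++ [a])))).IsChain G.Adj :=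
    chain_glue c1 (chain_glue hf.ch c2)
  have := hl.repl (A := a :: (J ++ [b])) (A1 := J ++ [b]) (A2 := a :: J) (a := b) (b := a)
    (h := pre ++ u :: (f ++ v :: post)) hr rfl (by simp) ?_ ?_ (by simpa using hc)
  · simp at this
    omega
  · simp only [List.nodup_append, List.nodup_cons, List.mem_cons, List.mem_append]
    grind
  · intro x hx hx'
    have hxl : x ∈ l := by rw [hr.mem_iff]; simp at hx' ⊢; tauto
    simp only [List.mem_cons, List.mem_append] at hx
    grind

theorem ear_repl {V W : Type} {G : SimpleGraph V} {T : SimpleGraph W}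
    (R : TreeRep G T) {X D : Set W} {q : ℕ → W} {n : ℕ} {lam : W → ℕ} (hL : Lvl T X D q n lam)
    {l : List V} (hl : LMax G l) {a b u v y1 y2 : V} {J g f : List V} {j jf : ℕ} {E Ef : Set W}
    (hg : Ear R X D q lam j E b a g)
    (hf : Ear R X D q lam jf Ef u v f) (hr : l ~r (a :: (J ++ [b])) ++ g)
    (hle : g.length ≤ f.length)
    (hul : u ∉ l) (hvl : v ∉ l) (hfl : ∀ w ∈ f, w ∉ l) (hy1l : y1 ∉ l) (hy2l : y2 ∉ l)
    (hy : j ≠ jf → y1 ≠ y2) (hy1 : q j ∈ R.S y1) (hy1' : q jf ∈ R.S y1)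
    (hy2 : q j ∈ R.S y2) (hy2' : q jf ∈ R.S y2) : False := by
  have hqE : q jf ∉ Ef := by
    obtain ⟨t, ht⟩ := hf.comp.1
    have := (hL.comp hf.comp ht).2.2.2
    rwa [hf.lev t ht] at this
  have hal : a ∈ l := by rw [hr.mem_iff]; simp
  have hbl : b ∈ l := by rw [hr.mem_iff]; simp
  have hne : ∀ {c x : V}, c ∈ l → x ∉ l → c ≠ x := by
    rintro c x h1 h2 rfl
    exact h2 h1
  by_cases hj : j = jf
  · subst hj
    exact ear_repl_aux R hl hf hr hle hqE hul hvl hfl (pre := []) (post := []) (by simp) (by simp)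
      (by simp) (by simp) (by simp) (by simpa using R.adj_of (hne hbl hul) hg.hu hf.hu)
      (by simpa using R.adj_of (hne hal hvl).symm hf.hv hg.hv)
  · have key : ∀ z1 z2, z1 ∉ l → z2 ∉ l → z1 ≠ z2 → q j ∈ R.S z1 → q jf ∈ R.S z1 →
        q j ∈ R.S z2 → q jf ∈ R.S z2 → z1 ≠ v → z2 ≠ u → False := by
      intro z1 z2 hz1l hz2l hz hz1 hz1' hz2 hz2' hzv hzu
      obtain ⟨pre, p1, p2, p3⟩ := conn_list R (hne hbl hz1l) hg.hu hz1 hz1' hf.hu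
      obtain ⟨post, s1, s2, s3⟩ := conn_list R (hne hal hz2l) hg.hv hz2 hz2' hf.hv
      refine ear_repl_aux R hl hf hr hle hqE hul hvl hfl (pre := pre) (post := post.reverse)
        ?_ ?_ ?_ p2 (by simpa using s2) p3 (by simpa using chain_rev s3)
      · intro x hx
        obtain ⟨rfl, h⟩ := p1 x hx
        exact ⟨h, hzv, hz1l, hz1'⟩
      · intro x hx
        obtain ⟨rfl, h⟩ := s1 x (by simpa using hx)
        exact ⟨hzu, h, hz2l, hz2'⟩
      · intro x hx hx'
        obtain ⟨rfl, h⟩ := p1 x hx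
        obtain ⟨rfl, h⟩ := s1 x (by simpa using hx')
        exact hz rfl
    by_cases h1 : y1 = v
    · refine key y2 y1 hy2l hy1l (hy hj).symm hy2 hy2' hy1 hy1' ?_ ?_
      · rintro rfl; exact hy hj h1
      · rintro rfl; exact hf.ne h1
    · by_cases h3 : y2 = u
      · refine key y2 y1 hy2l hy1l (hy hj).symm hy2 hy2' hy1 hy1' ?_ ?_
        · rintro rfl; exact hf.ne h3.symm
        · rintro rfl; exact hy hj h3.symm
      · exact key y1 y2 hy1l hy2l (hy hj) hy1 hy1' hy2 hy2' h1 h3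


theorem round_pair {V W : Type} {G : SimpleGraph V} {T : SimpleGraph W} (h2 : TwoConnected G)
    (R : TreeRep G T) {X D : Set W} {q : ℕ → W} {n : ℕ} {lam : W → ℕ} (hL : Lvl T X D q n lam)
    {F : Set (List V)} (hF : ∀ l ∈ F, LMax G l) (hne : F.Nonempty)
    (hC0 : ∀ l ∈ F, ∀ t E, LHit R l t → IsCompOf T (X \ D) E → t ∈ E →
      ∃ a ∈ l, ∃ b ∈ l, a ≠ b ∧ q (lam t) ∈ R.S a ∧ q (lam t) ∈ R.S b)
    {d i1 : ℕ} (hi1 : 1 ≤ i1) (hin : i1 + d ≤ n)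
    (hit : ∀ l ∈ F, ∃ t, LHit R l t ∧ i1 ≤ lam t ∧ lam t ≤ i1 + d)
    (hmin : ∀ d' < d, ∀ i, 1 ≤ i → i + d' ≤ n →
      ∃ l ∈ F, ∀ t, LHit R l t → ¬ (i ≤ lam t ∧ lam t ≤ i + d')) :
    ∃ y1 y2, (0 < d → y1 ≠ y2) ∧ ∀ j, i1 ≤ j → j ≤ i1 + d → q j ∈ R.S y1 ∧ q j ∈ R.S y2 := by
  rcases Nat.eq_zero_or_pos d with hd | hd
  · subst hd
    obtain ⟨l, hl⟩ := hne
    obtain ⟨t, ht, h3, h4⟩ := hit l hl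
    have hti : lam t = i1 := by omega
    have htX : t ∈ X := (hL.l2 t).1 (by omega)
    obtain ⟨y, hy⟩ : ∃ y, q i1 ∈ R.S y := by
      by_cases htD : t ∈ D
      · have h5 := hL.l3 t htD
        obtain ⟨a, b, -, ha, -⟩ := ht
        rw [h5, hti] at ha
        exact ⟨a, ha⟩
      · obtain ⟨E, hE, htE⟩ := exists_comp T (s := X \ D) ⟨htX, htD⟩
        obtain ⟨a, -, b, -, -, ha, -⟩ := hC0 l hl t E ht hE htE
        rw [hti] at ha
        exact ⟨a, ha⟩
    refine ⟨y, y, fun h => absurd h (by omega), fun j h5 h6 => ?_⟩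
    obtain rfl : j = i1 := by omega
    exact ⟨hy, hy⟩
  · have key : ∀ y, (∃ s ∈ R.S y, lam s ≤ i1) → (∃ s ∈ R.S y, i1 + d ≤ lam s) →
        ∀ j, i1 ≤ j → j ≤ i1 + d → q j ∈ R.S y := by
      rintro y ⟨s, hs, hs'⟩ ⟨s2, ht, ht'⟩ j hj hj'
      exact hL.cross (R.subtree_connected y) hs ht (by omega) (by omega) (by omega) (by omega)
    suffices h : ∃ y1 y2, y1 ≠ y2 ∧ ((∃ s ∈ R.S y1, lam s ≤ i1) ∧ (∃ s ∈ R.S y1, i1 + d ≤ lam s)) ∧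
        ((∃ s ∈ R.S y2, lam s ≤ i1) ∧ (∃ s ∈ R.S y2, i1 + d ≤ lam s)) by
      obtain ⟨y1, y2, hy, ⟨a1, a2⟩, b1, b2⟩ := h
      exact ⟨y1, y2, fun _ => hy, fun j h5 h6 => ⟨key y1 a1 a2 j h5 h6, key y2 b1 b2 j h5 h6⟩⟩
    obtain ⟨l1, hl1, hn1⟩ := hmin (d - 1) (by omega) (i1 + 1) (by omega) (by omega)
    obtain ⟨l2, hl2, hn2⟩ := hmin (d - 1) (by omega) i1 (by omega) (by omega)
    obtain ⟨t1, ht1, h3, h4⟩ := hit l1 hl1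
    obtain ⟨t2, ht2, h5, h6⟩ := hit l2 hl2
    have e1 := hn1 t1 ht1
    have e2 := hn2 t2 ht2
    by_cases hA : ∃ t, LHit R l1 t ∧ i1 + d + 1 ≤ lam t
    · obtain ⟨v, w, hvw, -, -, ⟨s1, a1, b1⟩, ⟨s2, a2, b2⟩, ⟨s3, a3, b3⟩, ⟨s4, a4, b4⟩⟩ :=
        SPAN R lam (α := i1) (β := i1 + d + 1) (hF l1 hl1).1
          (by intro t ht; have := hn1 t ht; omega) ⟨t1, ht1, by omega⟩ hA
      exact ⟨v, w, hvw, ⟨⟨s1, a1, b1⟩, ⟨s2, a2, by omega⟩⟩, ⟨s3, a3, b3⟩, ⟨s4, a4, by omega⟩⟩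
    by_cases hB : ∃ t, LHit R l2 t ∧ lam t ≤ i1 - 1
    · obtain ⟨v, w, hvw, -, -, ⟨s1, a1, b1⟩, ⟨s2, a2, b2⟩, ⟨s3, a3, b3⟩, ⟨s4, a4, b4⟩⟩ :=
        SPAN R lam (α := i1 - 1) (β := i1 + d) (hF l2 hl2).1
          (by intro t ht; have := hn2 t ht; omega) hB ⟨t2, ht2, by omega⟩
      exact ⟨v, w, hvw, ⟨⟨s1, a1, by omega⟩, ⟨s2, a2, by omega⟩⟩, ⟨s3, a3, by omega⟩,
        ⟨s4, a4, by omega⟩⟩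
    obtain ⟨y, z, hyz, y1, y2, z1, z2⟩ := LC h2 (hF l1 hl1) (hF l2 hl2)
    have g1 : ∀ y ∈ l1, ∃ s ∈ R.S y, lam s ≤ i1 := by
      intro y hy
      obtain ⟨s, hs, hs'⟩ := exists_hit R (hF l1 hl1).1 hy
      refine ⟨s, hs, ?_⟩
      have := hn1 s hs'
      by_contra hc
      exact hA ⟨s, hs', by omega⟩
    have g2 : ∀ y ∈ l2, ∃ s ∈ R.S y, i1 + d ≤ lam s := by
      intro y hy
      obtain ⟨s, hs, hs'⟩ := exists_hit R (hF l2 hl2).1 hy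
      refine ⟨s, hs, ?_⟩
      have := hn2 s hs'
      by_contra hc
      exact hB ⟨s, hs', by omega⟩
    exact ⟨y, z, hyz, ⟨g1 y y1, g2 y y2⟩, g1 z z1, g2 z z2⟩

theorem round_lemma {V W : Type} [Fintype V] {G : SimpleGraph V} {T : SimpleGraph W}
    (h2 : TwoConnected G)
    (R : TreeRep G T) {X D : Set W} {q : ℕ → W} {n : ℕ} {lam : W → ℕ} (hL : Lvl T X D q n lam)
    {F : Set (List V)} (hF : ∀ l ∈ F, LMax G l) (hFX : ∀ l ∈ F, ∃ t ∈ X, LHit R l t) :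
    ∃ A : Finset V, A.card ≤ 4 ∧ ((∀ l ∈ F, ∃ v ∈ A, v ∈ l) ∨
      ∃ E, IsCompOf T (X \ D) E ∧ ∀ l ∈ F, (∀ v ∈ A, v ∉ l) → ∃ t ∈ E, LHit R l t) := by
  classical
  rcases F.eq_empty_or_nonempty with rfl | hne
  · exact ⟨∅, by simp, Or.inl (by simp)⟩
  by_cases hc : ∃ l ∈ F, ∃ t E, LHit R l t ∧ IsCompOf T (X \ D) E ∧ t ∈ E ∧
      ∀ a ∈ l, ∀ b ∈ l, q (lam t) ∈ R.S a → q (lam t) ∈ R.S b → a = b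
  · obtain ⟨l, hl, t, E, hit, hE, htE, hu⟩ := hc
    exact ⟨∅, by simp, Or.inr ⟨E, hE, fun l' hl' _ =>
      round_case0 h2 R hL (hF l hl) (hF l' hl') hE htE hit hu⟩⟩
  have hC0 : ∀ l ∈ F, ∀ t E, LHit R l t → IsCompOf T (X \ D) E → t ∈ E →
      ∃ a ∈ l, ∃ b ∈ l, a ≠ b ∧ q (lam t) ∈ R.S a ∧ q (lam t) ∈ R.S b := by
    intro l hl t E hit hE htE
    by_contra hno
    refine hc ⟨l, hl, t, E, hit, hE, htE, fun a ha b hb h3 h4 => ?_⟩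
    by_contra hab
    exact hno ⟨a, ha, b, hb, hab, h3, h4⟩
  let P : ℕ → Prop := fun d => ∃ i, 1 ≤ i ∧ i + d ≤ n ∧
    ∀ l ∈ F, ∃ t, LHit R l t ∧ i ≤ lam t ∧ lam t ≤ i + d
  have hP : ∃ d, P d := by
    have hn : 1 ≤ n := by
      obtain ⟨l, hl⟩ := hne
      obtain ⟨t, ht, -⟩ := hFX l hl
      exact ((hL.l2 t).2 ht).trans (hL.l4 t)
    refine ⟨n - 1, 1, le_rfl, by omega, fun l hl => ?_⟩
    obtain ⟨t, ht, hit⟩ := hFX l hl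
    refine ⟨t, hit, (hL.l2 t).2 ht, ?_⟩
    have := hL.l4 t
    omega
  obtain ⟨i1, hi1, hin, hit⟩ := Nat.find_spec hP
  have hmin : ∀ d' < Nat.find hP, ∀ i, 1 ≤ i → i + d' ≤ n →
      ∃ l ∈ F, ∀ t, LHit R l t → ¬ (i ≤ lam t ∧ lam t ≤ i + d') := by
    intro d' hd' i hi hid
    by_contra hno
    push Not at hno
    exact Nat.find_min hP hd' ⟨i, hi, hid, hno⟩
  generalize Nat.find hP = d at *
  obtain ⟨y1, y2, hy, hyq⟩ := round_pair h2 R hL hF hne hC0 hi1 hin hit hmin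
  let Q : ℕ → Prop := fun k => ∃ j E u v f, i1 ≤ j ∧ j ≤ i1 + d ∧
    Ear R X D q lam j E u v f ∧ f.length = k
  have hQ : ∀ l ∈ F, y1 ∉ l → ∃ j E a b J g, i1 ≤ j ∧ j ≤ i1 + d ∧
      Ear R X D q lam j E b a g ∧ l ~r (a :: (J ++ [b])) ++ g := by
    intro l hl hyl
    obtain ⟨t, ht, h3, h4⟩ := hit l hl
    obtain ⟨E, a, b, J, g, h5, h6⟩ := get_ear R hL (hF l hl) ht ((hL.l2 t).1 (by omega))
      (hyq _ h3 h4).1 hyl (fun E hE htE => hC0 l hl t E ht hE htE)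
    exact ⟨lam t, E, a, b, J, g, h3, h4, h5, h6⟩
  by_cases hex : ∃ k, Q k
  · obtain ⟨k, hk, hmax⟩ : ∃ k, Q k ∧ ∀ k', Q k' → k' ≤ k := by
      have hb : ∀ k, Q k → k ≤ Fintype.card V := by
        rintro k ⟨j, E, u, v, f, -, -, hf, rfl⟩
        exact hf.nd.length_le_card
      obtain ⟨k0, hk0⟩ := hex
      exact ⟨Nat.findGreatest Q (Fintype.card V), Nat.findGreatest_spec (hb k0 hk0) hk0,
        fun k' hk' => Nat.le_findGreatest (hb k' hk') hk'⟩
    obtain ⟨jf, Ef, u, v, f, hj1, hj2, hf, rfl⟩ := hk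
    refine ⟨{u, v, y1, y2}, Finset.card_le_four, Or.inr ⟨Ef, hf.comp, fun l hl hA => ?_⟩⟩
    have hul := hA u (by simp)
    have hvl := hA v (by simp)
    have hy1l := hA y1 (by simp)
    have hy2l := hA y2 (by simp)
    by_cases hfl : ∃ w ∈ f, w ∈ l
    · obtain ⟨w, hw, hwl⟩ := hfl
      obtain ⟨t, ht, hh⟩ := exists_hit R (hF l hl).1 hwl
      exact ⟨t, hf.sub w hw ht, hh⟩
    · exfalso
      obtain ⟨j, E, a, b, J, g, h3, h4, hg, hr⟩ := hQ l hl hy1l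
      refine ear_repl R hL (hF l hl) hg hf hr (hmax _ ⟨j, E, b, a, g, h3, h4, hg, rfl⟩) hul hvl
        (fun w hw hwl => hfl ⟨w, hw, hwl⟩) hy1l hy2l (fun hne => hy (by omega))
        (hyq j h3 h4).1 (hyq jf hj1 hj2).1 (hyq j h3 h4).2 (hyq jf hj1 hj2).2
  · refine ⟨{y1}, by simp, Or.inl fun l hl => ⟨y1, by simp, ?_⟩⟩
    by_contra hyl
    obtain ⟨j, E, a, b, J, g, h3, h4, h5, -⟩ := hQ l hl hyl
    exact hex ⟨g.length, j, E, b, a, g, h3, h4, h5, rfl⟩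


theorem main_ind {V W : Type} [Fintype V] {G : SimpleGraph V} {T : SimpleGraph W}
    (h2 : TwoConnected G) (R : TreeRep G T) :
    ∀ (t : ℕ) (X : Set W) (x : W), cutterWins T t X x → x ∈ X →
      (∀ a b, a ∈ X → b ∉ X → T.Adj a b → a = x) →
      ∀ F : Set (List V), (∀ l ∈ F, LMax G l) → (∀ l ∈ F, ∃ t ∈ X, LHit R l t) →
      ∃ A : Finset V, A.card ≤ 4 * t ∧ ∀ l ∈ F, ∃ v ∈ A, v ∈ l := by
  classical
  intro t
  induction t with
  | zero => intro X x h; exact h.elim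
  | succ t ih =>
    rintro X x ⟨z, -, p, hp, hpX, hw⟩ hx hbr F hF hFX
    obtain ⟨lam, hL⟩ := exists_lvl R.isTree hx hbr p hp hpX
    obtain ⟨A, hA, h | ⟨E, hE, h⟩⟩ := round_lemma h2 R hL hF hFX
    · exact ⟨A, by omega, h⟩
    · rcases hw with hw | hw
      · obtain ⟨e, he⟩ := hE.1
        have := hE.2.1 he
        exact absurd (hw ▸ this.1) this.2
      · obtain ⟨x', hx', hadj, hbr'⟩ := hL.root R.isTree hE
        obtain ⟨B, hB, hB'⟩ := ih E x' (hw E x' hE hx' hadj) hx' hbr'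
          {l | l ∈ F ∧ ∀ v ∈ A, v ∉ l} (fun l hl => hF l hl.1) (fun l hl => h l hl.1 hl.2)
        refine ⟨A ∪ B, (Finset.card_union_le A B).trans (by omega), fun l hl => ?_⟩
        by_cases hm : ∃ v ∈ A, v ∈ l
        · obtain ⟨v, hv, hvl⟩ := hm
          exact ⟨v, Finset.mem_union_left _ hv, hvl⟩
        · push Not at hm
          obtain ⟨v, hv, hvl⟩ := hB' l ⟨hl, hm⟩
          exact ⟨v, Finset.mem_union_right _ hv, hvl⟩

theorem cutterWins_of_card {W : Type} [Fintype W] (T : SimpleGraph W) :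
    ∀ (t : ℕ) (X : Set W) (x : W), x ∈ X → X.ncard ≤ t → cutterWins T t X x := by
  intro t
  induction t with
  | zero =>
    intro X x hx h
    have : X = ∅ := (Set.ncard_eq_zero (Set.toFinite X)).1 (by omega)
    simp [this] at hx
  | succ t ih =>
    intro X x hx h
    refine ⟨x, hx, Walk.nil, by simp, by simpa using hx, Or.inr ?_⟩
    intro X' x' hX' hx' _
    refine ih X' x' hx' ?_
    have h3 : X' ⊂ X := by
      refine ⟨fun a ha => (hX'.2.1 ha).1, fun hc => ?_⟩
      exact (hX'.2.1 (hc hx)).2 (by simp)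
    have := Set.ncard_lt_ncard h3 (Set.toFinite X)
    omega

theorem final_thm {V W : Type} [Fintype V] [Fintype W] (G : SimpleGraph V)
    (T : SimpleGraph W) (h2 : TwoConnected G) (R : TreeRep G T) :
    lct G ≤ 4 * ccg T := by
  haveI : Nonempty W := R.isTree.1.nonempty
  obtain ⟨r, hr⟩ : ccg T ∈ Set.range fun r : W => ccgOn T Set.univ r :=
    Nat.sInf_mem (Set.range_nonempty _)
  have hw : cutterWins T (ccg T) Set.univ r := by
    rw [← hr]
    exact Nat.sInf_mem (s := {t : ℕ | cutterWins T t Set.univ r})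
      ⟨_, cutterWins_of_card T _ Set.univ r (Set.mem_univ r) le_rfl⟩
  obtain ⟨A, hA, hA'⟩ := main_ind h2 R _ _ r hw (Set.mem_univ r)
    (fun a b _ hb => absurd (Set.mem_univ b) hb) {l | LMax G l} (fun l hl => hl) (by
      intro l hl
      have hlen := hl.1.2.1
      obtain ⟨v, hv⟩ := List.exists_mem_of_length_pos (l := l) (by omega)
      obtain ⟨t, -, ht⟩ := exists_hit R hl.1 hv
      exact ⟨t, Set.mem_univ t, ht⟩)
  refine le_trans (Nat.sInf_le ⟨(A : Set V), A.finite_toSet, rfl, ?_⟩) ?_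
  · intro a c hc
    obtain ⟨v, hv, hvc⟩ := hA' _ (LMax.of_walk c hc)
    exact ⟨v, hv, List.mem_of_mem_tail hvc⟩
  · rw [Set.ncard_coe_finset]
    exact hA

/-- If `G` is a 2-connected chordal graph with minimal tree representation
`T`, then `lct(G) ≤ 4 · ccg(T)`. -/
theorem lct_le_ccg {V W : Type} [Fintype V] [Fintype W] (G : SimpleGraph V)
    (T : SimpleGraph W) (hchordal : IsChordal G) (h2 : TwoConnected G)
    (R : TreeRep G T) (hmin : R.IsMinimal) :
    lct G ≤ 4 * ccg T := by
  exact final_thm G T h2 R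
end

section
/- Let G be a connected graph, let w ∈ V(G), and let 𝒫 be a family of longest paths of G, each avoiding w. Call a vertex u an attachment point if u ∈ N(w). Let ℛ be a nonempty family of paths in G such that each R ∈ ℛ avoids w and has at least one endpoint that is an attachment point. If every path P ∈ 𝒫 contains a suffix (a subpath of P containing an endpoint of P) belonging to ℛ, then every maximum-length path in ℛ intersects every path in 𝒫. -/
open SimpleGraph

open Classical in
theorem ow_edge {V : Type} {G : SimpleGraph V} {a b : V} (p : G.Walk a b) (hp : p.IsPath)
    (x y : V) (h : s(x, y) ∈ p.edges) :
    p.support.idxOf x ≤ p.support.idxOf y + 1 := by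
  induction p with
  | nil => simp at h
  | @cons a c b hac p ih =>
    rw [SimpleGraph.Walk.cons_isPath_iff] at hp
    rw [SimpleGraph.Walk.edges_cons, List.mem_cons] at h
    have hc : p.support.idxOf c = 0 := by
      cases p <;> simp
    rcases h with h | h
    · rw [Sym2.eq_iff] at h
      rcases h with ⟨rfl, rfl⟩ | ⟨rfl, rfl⟩
      · simp [List.idxOf_cons_self]
      · rw [SimpleGraph.Walk.support_cons, List.idxOf_cons_ne _ hac.ne, hc]
        omega
    · have hx := p.fst_mem_support_of_mem_edges h
      have hy := p.snd_mem_support_of_mem_edges h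
      have h1 : a ≠ x := fun e => hp.2 (e ▸ hx)
      have h2 : a ≠ y := fun e => hp.2 (e ▸ hy)
      rw [SimpleGraph.Walk.support_cons, List.idxOf_cons_ne _ h1, List.idxOf_cons_ne _ h2]
      have := ih hp.1 h
      omega

open Classical in
theorem ow_drop {V : Type} {G : SimpleGraph V} {a b : V} (p : G.Walk a b) (hp : p.IsPath)
    (u : V) (h : u ∈ p.support) :
    ∃ q : G.Walk u b, q.IsPath ∧ (∀ x ∈ q.support, x ∈ p.support) ∧
      q.length + p.support.idxOf u = p.length := by
  induction p with
  | @nil v =>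
    have : u = v := by simpa using h
    subst this
    exact ⟨SimpleGraph.Walk.nil, by simp, by simp, by simp⟩
  | @cons a c b hac p ih =>
    by_cases hu : a = u
    · subst hu
      exact ⟨.cons hac p, hp, fun _ h => h, by simp⟩
    · rw [SimpleGraph.Walk.cons_isPath_iff] at hp
      have h' : u ∈ p.support := by
        rw [SimpleGraph.Walk.support_cons, List.mem_cons] at h
        exact h.resolve_left (fun e => hu e.symm)
      obtain ⟨q, hq, hs, hl⟩ := ih hp.1 h'
      refine ⟨q, hq, fun x hx => by simp [hs x hx], ?_⟩
      rw [SimpleGraph.Walk.support_cons, List.idxOf_cons_ne _ hu, SimpleGraph.Walk.length_cons]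
      omega

open Classical in
theorem ow_walk {V : Type} {G : SimpleGraph V} {a b : V} (p : G.Walk a b) (hp : p.IsPath)
    {u v : V} (q : G.Walk u v) (h : ∀ e ∈ q.edges, e ∈ p.edges) :
    p.support.idxOf u ≤ p.support.idxOf v + q.length := by
  induction q with
  | nil => simp
  | @cons u c v huc q ih =>
    have h1 := ow_edge p hp u c (h _ (by simp))
    have h2 := ih (fun e he => h e (by simp [he]))
    rw [SimpleGraph.Walk.length_cons]
    omega

theorem ow_core {V : Type} {G : SimpleGraph V} {w a b u v c d : V} (p : G.Walk a b)
    (hp : IsLongestPath G p) (hpw : w ∉ p.support)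
    (s : G.Walk u v) (hs : s.toSubgraph ≤ p.toSubgraph) (ha : a ∈ s.support) (hu : G.Adj w u)
    (r : G.Walk c d) (hr : r.IsPath) (hrw : w ∉ r.support) (hc : G.Adj w c)
    (hl : s.length ≤ r.length) : ∃ x, x ∈ r.support ∧ x ∈ p.support := by
  classical
  by_contra hno
  push Not at hno
  have hE : ∀ e ∈ s.edges, e ∈ p.edges := by
    intro e he
    rw [← SimpleGraph.Walk.mem_edges_toSubgraph] at he ⊢
    exact SimpleGraph.Subgraph.edgeSet_mono hs he
  have hup : u ∈ p.support := by
    rw [← SimpleGraph.Walk.mem_verts_toSubgraph]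
    exact hs.1 (by simp)
  have h1 := ow_walk p hp.1 (s.takeUntil a ha)
    (fun e he => hE e (s.edges_takeUntil_subset_edges ha he))
  have h2 := s.length_takeUntil_le_length ha
  have h0 : p.support.idxOf a = 0 := by cases p <;> simp
  obtain ⟨q, hq, hqs, hql⟩ := ow_drop p hp.1 u hup
  have hw : (SimpleGraph.Walk.cons hc r).IsPath := by
    rw [SimpleGraph.Walk.cons_isPath_iff]; exact ⟨hr, hrw⟩
  have key : (q.reverse.append (.cons hu.symm (.cons hc r))).IsPath := by
    rw [SimpleGraph.Walk.isPath_def, SimpleGraph.Walk.support_append, List.nodup_append]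
    refine ⟨hq.reverse.support_nodup, by simpa using hw.support_nodup, ?_⟩
    intro x hx y hy e
    subst e
    have hx' := hqs x (by simpa using hx)
    simp only [SimpleGraph.Walk.support_cons, List.tail_cons, List.mem_cons] at hy
    rcases hy with rfl | hy
    · exact hpw hx'
    · exact hno x hy hx'
  have := hp.2 _ _ _ key
  simp at this
  omega

theorem ow_rev {V : Type} {G : SimpleGraph V} {a b : V} (p : G.Walk a b)
    (hp : IsLongestPath G p) : IsLongestPath G p.reverse :=
  ⟨hp.1.reverse, by simpa using hp.2⟩

theorem ow_core2 {V : Type} {G : SimpleGraph V} {w a b u v c d : V} (p : G.Walk a b)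
    (hp : IsLongestPath G p) (hpw : w ∉ p.support)
    (s : G.Walk u v) (hs : s.toSubgraph ≤ p.toSubgraph) (ha : a ∈ s.support ∨ b ∈ s.support)
    (hu : G.Adj w u ∨ G.Adj w v)
    (r : G.Walk c d) (hr : r.IsPath) (hrw : w ∉ r.support) (hc : G.Adj w c ∨ G.Adj w d)
    (hl : s.length ≤ r.length) : ∃ x, x ∈ r.support ∧ x ∈ p.support := by
  wlog h1 : a ∈ s.support generalizing a b
  · simpa using this p.reverse (ow_rev p hp) (by simpa using hpw) (by simpa using hs) ha.symm
      (ha.resolve_left h1)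
  wlog h2 : G.Adj w u generalizing u v
  · exact this s.reverse hu.symm (by simpa using hl) (by simpa using hs) (by simpa using ha)
      (by simpa using h1) (hu.resolve_left h2)
  wlog h3 : G.Adj w c generalizing c d
  · simpa using this r.reverse hr.reverse (by simpa using hrw) hc.symm (by simpa using hl)
      (hc.resolve_left h3)
  exact ow_core p hp hpw s hs h1 h2 r hr hrw h3 hl

/-- Let `G` be connected, `w` a glue vertex, and `𝒫 = P` a family of
longest paths avoiding `w`. Let `ℛ` be a nonempty family of paths avoiding `w`, each with
at least one endpoint adjacent to `w`. If every path of `𝒫` contains a suffix belonging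
to `ℛ`, then every maximum-length path of `ℛ` intersects every path of `𝒫`. -/
theorem one_way {V : Type} (G : SimpleGraph V) (hconn : G.Connected) (w : V)
    {ι : Type} (Pa Pb : ι → V) (P : ∀ i : ι, G.Walk (Pa i) (Pb i))
    (hP : ∀ i : ι, IsLongestPath G (P i)) (hPw : ∀ i : ι, w ∉ (P i).support)
    {ρ : Type} [Nonempty ρ] (Ra Rb : ρ → V) (Rw : ∀ j : ρ, G.Walk (Ra j) (Rb j))
    (hRpath : ∀ j : ρ, (Rw j).IsPath) (hRw : ∀ j : ρ, w ∉ (Rw j).support)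
    (hatt : ∀ j : ρ, G.Adj w (Ra j) ∨ G.Adj w (Rb j))
    (hsuffix : ∀ i : ι, ∃ j : ρ, (Rw j).toSubgraph ≤ (P i).toSubgraph ∧
      (Pa i ∈ (Rw j).support ∨ Pb i ∈ (Rw j).support)) :
    ∀ j : ρ, (∀ j' : ρ, (Rw j').length ≤ (Rw j).length) →
      ∀ i : ι, ∃ v : V, v ∈ (Rw j).support ∧ v ∈ (P i).support := by
  intro j hj i
  obtain ⟨k, hk, hk2⟩ := hsuffix i
  exact ow_core2 (P i) (hP i) (hPw i) (Rw k) hk hk2 (hatt k) (Rw j) (hRpath j) (hRw j) (hatt j) (hj k)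
end
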